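/- arXiv:1406.6386 — 7 statements merged into one kernel-verified Lean document; each statement's English description precedes it below -/
import Mathlib

section
/- If I and J are two orthogonal countable families of subsets of a countable set N, then I and J are separated. -/
open Set

/-- `a ⊆* b`: all but finitely many elements of `a` belong to `b`. -/
def AlmostSub {N : Type*} (a b : Set N) : Prop := (a \ b).Finite

/-- Two families of sets are orthogonal if any two members intersect in a finite set. -/
def OrthFam {N : Type*} (I J : Set (Set N)) : Prop := ∀ x ∈ I, ∀ y ∈ J, (x ∩ y).Finite

/-- The families `Γ i` are separated if there are sets `a i` with `x ⊆* a i` for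
every `x ∈ Γ i` and `⋂ i, a i` finite. -/
def SepFam {N ι : Type*} (Γ : ι → Set (Set N)) : Prop :=
  ∃ a : ι → Set N, (∀ i, ∀ x ∈ Γ i, (x \ a i).Finite) ∧ (⋂ i, a i).Finite

/-- The families `Γ i` are countably separated. -/
def CSepFam {N ι : Type*} (Γ : ι → Set (Set N)) : Prop :=
  ∃ C : Set (Set N), C.Countable ∧ ∀ x : ι → Set N, (∀ i, x i ∈ Γ i) →
    ∃ c : ι → Set N, (∀ i, c i ∈ C) ∧ (∀ i, x i ⊆ c i) ∧ (⋂ i, c i) = ∅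

/-- A family is infinitely hereditary if every infinite subset of a member is a member. -/
def HerFam {N : Type*} (I : Set (Set N)) : Prop := ∀ x ∈ I, ∀ y ⊆ x, y.Infinite → y ∈ I

/-- `Γ` is an `n∗`-gap. -/
def NStarGap {N ι : Type*} (Γ : ι → Set (Set N)) : Prop :=
  (∀ x : ι → Set N, (∀ i, x i ∈ Γ i) → (⋂ i, x i).Finite) ∧
  ¬ SepFam Γ ∧ (∀ i, HerFam (Γ i))

/-- `Γ` is an `n`-gap: an `n∗`-gap with pairwise orthogonal families. -/
def NGap {N ι : Type*} (Γ : ι → Set (Set N)) : Prop :=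
  NStarGap Γ ∧ ∀ i j, i ≠ j → OrthFam (Γ i) (Γ j)

/-- The orthogonal of a family of sets. -/
def orthFamC {N : Type*} (I : Set (Set N)) : Set (Set N) := {y | ∀ x ∈ I, (x ∩ y).Finite}

/-- A family of subsets of `N`, viewed as a subset of the Cantor space `2^N`,
is analytic. -/
def AnalyticFam {N : Type*} (Γ : Set (Set N)) : Prop :=
  MeasureTheory.AnalyticSet {f : N → Bool | {x | f x = true} ∈ Γ}

/-- A family of subsets of `N`, viewed as a subset of the Cantor space `2^N`, is closed. -/
def ClosedFam {N : Type*} (Γ : Set (Set N)) : Prop :=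
  IsClosed {f : N → Bool | {x | f x = true} ∈ Γ}

/-- The order `≤` between multiple gaps: an injection preserving the families
and their orthogonals. -/
def GapLE {A B ι : Type*} (Γ : ι → Set (Set A)) (Δ : ι → Set (Set B)) : Prop :=
  ∃ φ : A → B, Function.Injective φ ∧ ∀ i,
    (∀ x ∈ Γ i, φ '' x ∈ Δ i) ∧ (∀ y ∈ orthFamC (Γ i), φ '' y ∈ orthFamC (Δ i))

/-- `X` is an `i`-chain in the `n`-adic tree: `X = {x₀,x₁,…}` with `x_k⌢i ≤ x_{k+1}`. -/
def IChain {n : ℕ} (i : Fin n) (X : Set (List (Fin n))) : Prop :=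
  ∃ x : ℕ → List (Fin n), X = Set.range x ∧ ∀ k, (x k ++ [i]) <+: x (k + 1)

/-- `X` is an `[i]`-chain in the `n`-adic tree: `X = {x₀,x₁,…}` with
`x_{k+1} = x_k⌢i⌢w_k` where all entries of `w_k` are `≤ i`. -/
def BChain {n : ℕ} (i : Fin n) (X : Set (List (Fin n))) : Prop :=
  ∃ x : ℕ → List (Fin n), X = Set.range x ∧
    ∀ k, ∃ w : List (Fin n), (∀ j ∈ w, j ≤ i) ∧ x (k + 1) = x k ++ i :: w

/-!
Enumerate `I` as `x₀, x₁, …` and `J` as `y₀, y₁, …`. The set `a = ⋃ i, (xᵢ \ ⋃ j ≤ i, yⱼ)` and its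
complement separate the two families: `xᵢ` loses to `a` only points of `xᵢ ∩ yⱼ` with `j ≤ i`, while
`yⱼ` meets `a` only in points of `xᵢ ∩ yⱼ` with `i < j`. All that matters about the order is that
each `i` has finitely many `j ≤ i` and each `j` has finitely many `i < j`.
-/

section Separation

variable {N ι κ : Type*} {r : ι → κ → Prop} {x : ι → Set N} {y : κ → Set N}

/-- The union of the sets `x i`, each deprived of the sets `y j` with `r i j`. For a suitable
relation `r` it almost contains every `x i` and is almost disjoint from every `y j`. -/
def separator (r : ι → κ → Prop) (x : ι → Set N) (y : κ → Set N) : Set N :=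
  ⋃ i, x i \ ⋃ j ∈ {j | r i j}, y j

theorem diff_separator_subset (i : ι) :
    x i \ separator r x y ⊆ ⋃ j ∈ {j | r i j}, x i ∩ y j := by
  rw [← inter_iUnion₂]
  rintro p ⟨hpx, hpa⟩
  exact ⟨hpx, by_contra fun hpy => hpa (mem_iUnion.2 ⟨i, hpx, hpy⟩)⟩

theorem inter_separator_subset (j : κ) :
    y j ∩ separator r x y ⊆ ⋃ i ∈ {i | ¬ r i j}, x i ∩ y j := by
  rintro p ⟨hpy, hpa⟩
  obtain ⟨i, hpx, hpi⟩ := mem_iUnion.1 hpa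
  have hij : ¬ r i j := fun hij => hpi (mem_biUnion hij hpy)
  exact mem_biUnion hij ⟨hpx, hpy⟩

theorem exists_rel_finite_and_finite_not (ι κ : Type*) [Countable ι] [Countable κ] :
    ∃ r : ι → κ → Prop, (∀ i, {j | r i j}.Finite) ∧ ∀ j, {i | ¬ r i j}.Finite := by
  obtain ⟨f, hf⟩ := exists_injective_nat ι
  obtain ⟨g, hg⟩ := exists_injective_nat κ
  refine ⟨fun i j => g j ≤ f i, fun i => (finite_Iic (f i)).preimage hg.injOn, fun j => ?_⟩
  simp only [not_le]
  exact (finite_Iio (g j)).preimage hf.injOn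

theorem exists_finite_diff_and_finite_inter [Countable ι] [Countable κ]
    (h : ∀ i j, (x i ∩ y j).Finite) :
    ∃ a : Set N, (∀ i, (x i \ a).Finite) ∧ ∀ j, (y j ∩ a).Finite := by
  obtain ⟨r, hr, hr_not⟩ := exists_rel_finite_and_finite_not ι κ
  exact ⟨separator r x y,
    fun i => ((hr i).biUnion fun j _ => h i j).subset (diff_separator_subset i),
    fun j => ((hr_not j).biUnion fun i _ => h i j).subset (inter_separator_subset j)⟩

end Separation

theorem sepFam_pair_of_finite_diff_of_finite_inter {N : Type*} {I J : Set (Set N)} {a : Set N}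
    (hI : ∀ x ∈ I, (x \ a).Finite) (hJ : ∀ y ∈ J, (y ∩ a).Finite) : SepFam ![I, J] := by
  have hJ_compl : ∀ y ∈ J, (y \ aᶜ).Finite := fun y hy => by
    rw [sdiff_compl]
    exact hJ y hy
  have h_inter : ⋂ i, ![a, aᶜ] i = ∅ := by
    ext p
    simp [Fin.forall_fin_two]
  exact ⟨![a, aᶜ], Fin.forall_fin_two.2 ⟨hI, hJ_compl⟩, h_inter ▸ finite_empty⟩

theorem statement_0_general {N : Type*} {I J : Set (Set N)}
    (hI : I.Countable) (hJ : J.Countable) (horth : OrthFam I J) : SepFam ![I, J] := by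
  have := hI.to_subtype
  have := hJ.to_subtype
  obtain ⟨a, haI, haJ⟩ := exists_finite_diff_and_finite_inter
    (x := ((↑) : I → Set N)) (y := ((↑) : J → Set N)) fun u v => horth u u.2 v v.2
  exact sepFam_pair_of_finite_diff_of_finite_inter
    (fun u hu => haI ⟨u, hu⟩) fun v hv => haJ ⟨v, hv⟩

/-- two orthogonal countable families of subsets of a countable set
are separated. -/
theorem statement_0 (N : Type) [Countable N] [Infinite N] (I J : Set (Set N))
    (hI : I.Countable) (hJ : J.Countable) (horth : OrthFam I J) :
    SepFam ![I, J] :=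
  statement_0_general hI hJ horth
end

section
/- There exist two orthogonal families of subsets of ω, each of cardinality ℵ₁, which are not separated (Hausdorff's gap). -/
open Set

/-! Luzin's argument. List `ℵ₁` pairwise almost disjoint sets `A α` so that, for each `α` and each
finite `F`, only finitely many `β < α` satisfy `A α ∩ A β ⊆ F`. If `a` almost contains uncountably
many of these sets and `b` almost contains uncountably many others, then by the pigeonhole principle
the finite errors may be taken constant, so that all intersections `A α ∩ A β` across the two groups
lie in the union of `a ∩ b` with a fixed finite set. Taking `β` above infinitely many such `α`, the
choice of the sets `A α` forces `a ∩ b` to be infinite. -/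

universe u

variable {N ι T : Type*}

/-- Two sets are almost disjoint if their intersection is finite. -/
def AlmostDisjoint (a b : Set N) : Prop := (a ∩ b).Finite

instance : Std.Symm (AlmostDisjoint (N := N)) where
  symm a b (h : (a ∩ b).Finite) := show (b ∩ a).Finite from inter_comm a b ▸ h

/-- An indexed almost disjoint family: infinite sets, pairwise almost disjoint. The sets being
infinite, the indexing is automatically injective. -/
structure IsAlmostDisjointFamily (A : ι → Set N) : Prop where
  infinite : ∀ i, (A i).Infinite
  pairwise : Pairwise fun i j => AlmostDisjoint (A i) (A j)

namespace IsAlmostDisjointFamily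

theorem of_lt [LinearOrder ι] {A : ι → Set N} (hinf : ∀ i, (A i).Infinite)
    (hlt : ∀ i j, j < i → AlmostDisjoint (A i) (A j)) : IsAlmostDisjointFamily A where
  infinite := hinf
  pairwise :=
    have : Std.Symm fun i j => AlmostDisjoint (A i) (A j) := ⟨fun _ _ h => symm h⟩
    Pairwise.of_gt fun i j h => hlt i j h

theorem sumElim {κ : Type*} {A : ι → Set N} {B : κ → Set N} (hA : IsAlmostDisjointFamily A)
    (hB : IsAlmostDisjointFamily B) (hAB : ∀ i j, AlmostDisjoint (A i) (B j)) :
    IsAlmostDisjointFamily (Sum.elim A B) where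
  infinite := Sum.rec hA.infinite hB.infinite
  pairwise := by
    rintro (i | i) (j | j) hne
    · exact hA.pairwise fun h => hne (congrArg _ h)
    · exact hAB i j
    · exact symm (hAB j i)
    · exact hB.pairwise fun h => hne (congrArg _ h)

theorem image {M : Type*} {A : ι → Set N} (hA : IsAlmostDisjointFamily A) {φ : N → M}
    (hφ : Function.Injective φ) : IsAlmostDisjointFamily fun i => φ '' A i where
  infinite i := (hA.infinite i).image hφ.injOn
  pairwise i j hne := by
    change (φ '' A i ∩ φ '' A j).Finite
    rw [← image_inter hφ]
    exact (hA.pairwise hne).image φ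

theorem injective {A : ι → Set N} (hA : IsAlmostDisjointFamily A) : Function.Injective A := by
  intro i j h
  by_contra hne
  have hfin : (A i ∩ A j).Finite := hA.pairwise hne
  rw [← h, inter_self] at hfin
  exact hA.infinite i hfin

theorem orthFam_image {A : ι → Set N} (hA : IsAlmostDisjointFamily A) {U V : Set ι}
    (hUV : Disjoint U V) : OrthFam (A '' U) (A '' V) := by
  rintro _ ⟨i, hi, rfl⟩ _ ⟨j, hj, rfl⟩
  exact hA.pairwise (hUV.ne_of_mem hi hj)

theorem singleton_prod_univ : IsAlmostDisjointFamily fun n : ℕ => ({n} ×ˢ univ : Set (ℕ × ℕ)) where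
  infinite n := infinite_univ.prod_right (singleton_nonempty n)
  pairwise m n hne :=
    have hdisj : Disjoint ({m} ×ˢ univ : Set (ℕ × ℕ)) ({n} ×ˢ univ) :=
      disjoint_prod.2 (Or.inl (disjoint_singleton.2 hne))
    finite_empty.subset hdisj.inter_eq.subset

end IsAlmostDisjointFamily

/-- `Diagonalizes B S` says that the infinite set `S` is almost disjoint from every `B i`, but that
no finite set contains `S ∩ B i` for infinitely many `i`. A Luzin family is built by
adding such an `S` at every stage. -/
structure Diagonalizes (B : ι → Set N) (S : Set N) : Prop where
  infinite : S.Infinite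
  almostDisjoint : ∀ i, AlmostDisjoint S (B i)
  finite_setOf_inter_subset : ∀ F : Set N, F.Finite → {i | S ∩ B i ⊆ F}.Finite

theorem IsAlmostDisjointFamily.exists_mem_forall_notMem {B : ι → Set N}
    (hB : IsAlmostDisjointFamily B) {i : ι} {s : Set ι} (hs : s.Finite) (hi : i ∉ s) :
    ∃ x ∈ B i, ∀ j ∈ s, x ∉ B j := by
  have hfin : (⋃ j ∈ s, B i ∩ B j).Finite :=
    hs.biUnion fun j hj => hB.pairwise (ne_of_mem_of_not_mem hj hi).symm
  obtain ⟨x, hxi, hx⟩ := (hB.infinite i).exists_notMem_finite hfin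
  exact ⟨x, hxi, fun j hj hxj => hx (mem_biUnion hj ⟨hxi, hxj⟩)⟩

theorem IsAlmostDisjointFamily.exists_diagonalizes [Countable ι] [Infinite ι] {B : ι → Set N}
    (hB : IsAlmostDisjointFamily B) : ∃ S, Diagonalizes B S := by
  obtain ⟨f, hf⟩ := exists_injective_nat ι
  have exists_point (i : ι) : ∃ x ∈ B i, ∀ j, f j < f i → x ∉ B j :=
    hB.exists_mem_forall_notMem ((finite_Iio (f i)).preimage hf.injOn) (lt_irrefl (f i))
  choose p hp_mem hp_notMem using exists_point
  have hle {i j : ι} (h : p j ∈ B i) : f j ≤ f i := not_lt.1 fun hlt => hp_notMem j i hlt h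
  have hp : Function.Injective p := fun i j h =>
    hf (le_antisymm (hle (h ▸ hp_mem j)) (hle (h ▸ hp_mem i)))
  refine ⟨range p, infinite_range_of_injective hp, fun i => ?_, fun F hF => ?_⟩
  · refine (((finite_Iic (f i)).preimage hf.injOn).image p).subset ?_
    rintro _ ⟨⟨j, rfl⟩, hj⟩
    exact ⟨j, hle hj, rfl⟩
  · exact (hF.preimage hp.injOn).subset fun i hi => hi ⟨mem_range_self i, hp_mem i⟩

theorem exists_forall_domRestrict_Iio {X : Type*} [Nonempty X] [Preorder T] [WellFoundedLT T]
    (P : ∀ α : T, (Iio α → X) → X → Prop)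
    (h : ∀ (α : T) (A : T → X), (∀ β < α, P β ((Iio β).domRestrict A) (A β)) →
      ∃ x, P α ((Iio α).domRestrict A) x) :
    ∃ A : T → X, ∀ α, P α ((Iio α).domRestrict A) (A α) := by
  let A : T → X := IsWellFounded.fix (· < ·) fun α F =>
    Classical.epsilon (P α fun β : Iio α => F β β.2)
  have hA (α : T) : A α = Classical.epsilon (P α ((Iio α).domRestrict A)) :=
    IsWellFounded.fix_eq _ _ α
  refine ⟨A, fun α => ?_⟩
  induction α using WellFoundedLT.induction with
  | ind α ih =>
    rw [hA α]
    exact Classical.epsilon_spec (h α A ih)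

/-- A Luzin family: an almost disjoint family indexed by a linear order such that, for each `α` and
each finite `F`, only finitely many `β < α` satisfy `A α ∩ A β ⊆ F`. -/
structure IsLuzinFamily [LinearOrder T] (A : T → Set N) : Prop extends
    IsAlmostDisjointFamily A where
  finite_setOf_inter_subset : ∀ α (F : Set N), F.Finite → {β | β < α ∧ A α ∩ A β ⊆ F}.Finite

/-- The sets `C i` make the family to be diagonalized infinite at every stage, including those
`α` with only finitely many predecessors. -/
theorem IsAlmostDisjointFamily.exists_isLuzinFamily [Countable ι] [Infinite ι] {C : ι → Set N}
    (hC : IsAlmostDisjointFamily C) [LinearOrder T] [WellFoundedLT T]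
    (hT : ∀ α : T, (Iio α).Countable) : ∃ A : T → Set N, IsLuzinFamily A := by
  obtain ⟨A, hA⟩ : ∃ A : T → Set N,
      ∀ α, Diagonalizes (Sum.elim C ((Iio α).domRestrict A)) (A α) := by
    refine exists_forall_domRestrict_Iio (fun _ F S => Diagonalizes (Sum.elim C F) S) ?_
    intro α A ih
    have : Countable (Iio α) := (hT α).to_subtype
    have hpred : IsAlmostDisjointFamily ((Iio α).domRestrict A) :=
      .of_lt (fun β => (ih β β.2).infinite)
        fun β γ hγβ => (ih β β.2).almostDisjoint (Sum.inr ⟨γ, hγβ⟩)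
    exact (hC.sumElim hpred
      fun i β => symm ((ih β β.2).almostDisjoint (Sum.inl i))).exists_diagonalizes
  refine ⟨A, .of_lt (fun α => (hA α).infinite)
    fun α β hβα => (hA α).almostDisjoint (Sum.inr ⟨β, hβα⟩), fun α F hF => ?_⟩
  have hfin := ((hA α).finite_setOf_inter_subset F hF).preimage Sum.inr_injective.injOn
  refine (hfin.image Subtype.val).subset ?_
  rintro β ⟨hβα, hβF⟩
  exact ⟨⟨β, hβα⟩, hβF, rfl⟩

theorem exists_isLuzinFamily_countable_iUnion (N : Type*) [Infinite N] [LinearOrder T]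
    [WellFoundedLT T] (hT : ∀ α : T, (Iio α).Countable) :
    ∃ A : T → Set N, IsLuzinFamily A ∧ (⋃ α, A α).Countable := by
  obtain ⟨A, hA⟩ := IsAlmostDisjointFamily.singleton_prod_univ.exists_isLuzinFamily hT
  obtain ⟨φ, hφ⟩ : ∃ φ : ℕ × ℕ → N, Function.Injective φ :=
    ⟨_, (Nat.pairEquiv.toEmbedding.trans (Infinite.natEmbedding N)).injective⟩
  refine ⟨fun α => φ '' A α, ⟨hA.image hφ, fun α F hF => ?_⟩, ?_⟩
  · refine (hA.finite_setOf_inter_subset α _ (hF.preimage hφ.injOn)).subset ?_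
    rintro β ⟨hβα, hβF⟩
    rw [← image_inter hφ, image_subset_iff] at hβF
    exact ⟨hβα, hβF⟩
  · exact (countable_range φ).mono (iUnion_subset fun α => image_subset_range φ _)

theorem exists_finite_not_countable_setOf_sdiff_subset {A : T → Set N}
    (hA : (⋃ α, A α).Countable) {U : Set T} (hU : ¬U.Countable) {a : Set N}
    (ha : ∀ α ∈ U, AlmostSub (A α) a) :
    ∃ F : Set N, F.Finite ∧ ¬{α ∈ U | A α \ a ⊆ F}.Countable := by
  by_contra! h
  refine hU (((countable_ofPred_finite_subset hA).biUnion fun F hF => h F hF.1).mono ?_)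
  intro α hα
  have hmem : A α \ a ∈ {F | F.Finite ∧ F ⊆ ⋃ α, A α} :=
    ⟨ha α hα, sdiff_subset.trans (subset_iUnion A α)⟩
  exact mem_biUnion hmem ⟨hα, Subset.rfl⟩

theorem exists_mem_forall_lt_of_countable [LinearOrder T] (hT : ∀ α : T, (Iio α).Countable)
    {D V : Set T} (hD : D.Countable) (hV : ¬V.Countable) : ∃ β ∈ V, ∀ α ∈ D, α < β := by
  have hIic : (⋃ α ∈ D, Iic α).Countable := hD.biUnion fun α _ => by
    rw [← Iio_insert]
    exact (hT α).insert α
  obtain ⟨β, hβV, hβ⟩ := not_subset.1 fun hsub => hV (hIic.mono hsub)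
  exact ⟨β, hβV, fun α hα => not_le.1 fun hle => hβ (mem_biUnion hα hle)⟩

namespace IsLuzinFamily

variable [LinearOrder T] {A : T → Set N} {U V : Set T}

theorem exists_not_inter_subset (hA : IsLuzinFamily A) (hT : ∀ α : T, (Iio α).Countable)
    (hU : U.Infinite) (hV : ¬V.Countable) {F : Set N} (hF : F.Finite) :
    ∃ α ∈ U, ∃ β ∈ V, ¬A α ∩ A β ⊆ F := by
  obtain ⟨D, hDU, hD, hDinf⟩ := hU.exists_subset_countable_infinite
  obtain ⟨β, hβV, hβ⟩ := exists_mem_forall_lt_of_countable hT hD hV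
  by_contra! h
  refine hDinf ((hA.finite_setOf_inter_subset β F hF).subset fun α hα => ⟨hβ α hα, ?_⟩)
  rw [inter_comm]
  exact h α (hDU hα) β hβV

theorem not_sepFam (hA : IsLuzinFamily A) (hT : ∀ α : T, (Iio α).Countable)
    (hc : (⋃ α, A α).Countable) (hU : ¬U.Countable) (hV : ¬V.Countable) :
    ¬SepFam ![A '' U, A '' V] := by
  rintro ⟨a, ha, hfin⟩
  obtain ⟨F, hF, hUF⟩ := exists_finite_not_countable_setOf_sdiff_subset hc hU
    fun α hα => ha 0 _ (mem_image_of_mem A hα)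
  obtain ⟨G, hG, hVG⟩ := exists_finite_not_countable_setOf_sdiff_subset hc hV
    fun β hβ => ha 1 _ (mem_image_of_mem A hβ)
  obtain ⟨α, ⟨-, hαF⟩, β, ⟨-, hβG⟩, hαβ⟩ :=
    hA.exists_not_inter_subset hT (fun h => hUF h.countable) hVG ((hF.union hG).union hfin)
  refine hαβ fun x ⟨hxα, hxβ⟩ => ?_
  by_cases h0 : x ∈ a 0
  · by_cases h1 : x ∈ a 1
    · exact Or.inr (mem_iInter.2 (Fin.forall_fin_two.2 ⟨h0, h1⟩))
    · exact Or.inl (Or.inr (hβG ⟨hxβ, h1⟩))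
  · exact Or.inl (Or.inl (hαF ⟨hxα, h0⟩))

end IsLuzinFamily

theorem countable_Iio_omega_one_toType (α : (Ordinal.omega 1).ToType) : (Iio α).Countable := by
  rw [← Cardinal.le_aleph0_iff_set_countable, ← Cardinal.lt_aleph_one_iff]
  simpa using Cardinal.mk_Iio_lt α (by simp)

theorem exists_disjoint_mk_eq (T : Type*) [Infinite T] :
    ∃ U V : Set T, Disjoint U V ∧ Cardinal.mk U = Cardinal.mk T ∧
      Cardinal.mk V = Cardinal.mk T := by
  obtain ⟨e⟩ : Nonempty (T ⊕ T ≃ T) := by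
    rw [← Cardinal.eq, Cardinal.mk_sum, Cardinal.lift_id, Cardinal.add_mk_eq_self]
  refine ⟨range (e ∘ Sum.inl), range (e ∘ Sum.inr), ?_,
    Cardinal.mk_range_eq _ (e.injective.comp Sum.inl_injective),
    Cardinal.mk_range_eq _ (e.injective.comp Sum.inr_injective)⟩
  rw [range_comp, range_comp, disjoint_image_iff e.injective]
  exact isCompl_range_inl_range_inr.disjoint

theorem statement_1_general (N : Type u) [Infinite N] :
    ∃ I J : Set (Set N),
      Cardinal.mk I = Cardinal.aleph 1 ∧ Cardinal.mk J = Cardinal.aleph 1 ∧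
      OrthFam I J ∧ ¬ SepFam ![I, J] := by
  let T : Type u := (Ordinal.omega 1).ToType
  have hmk : Cardinal.mk T = Cardinal.aleph 1 := by simp [T]
  have : Infinite T := Cardinal.infinite_iff.2 (hmk ▸ Cardinal.aleph0_le_aleph 1)
  have hT : ∀ α : T, (Iio α).Countable := countable_Iio_omega_one_toType
  obtain ⟨A, hA, hc⟩ := exists_isLuzinFamily_countable_iUnion N hT
  obtain ⟨U, V, hUV, hU, hV⟩ := exists_disjoint_mk_eq T
  rw [hmk] at hU hV
  have not_countable {W : Set T} (hW : Cardinal.mk W = Cardinal.aleph 1) : ¬W.Countable := by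
    rw [← Cardinal.le_aleph0_iff_set_countable, hW, not_le]
    exact Cardinal.aleph0_lt_aleph_one
  exact ⟨A '' U, A '' V, (Cardinal.mk_image_eq hA.injective).trans hU,
    (Cardinal.mk_image_eq hA.injective).trans hV, hA.orthFam_image hUV,
    hA.not_sepFam hT hc (not_countable hU) (not_countable hV)⟩

/-- Hausdorff's gap: two orthogonal families of subsets of ω,
each of cardinality ℵ₁, which are not separated. -/
theorem statement_1 :
    ∃ I J : Set (Set ℕ),
      Cardinal.mk I = Cardinal.aleph 1 ∧ Cardinal.mk J = Cardinal.aleph 1 ∧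
      OrthFam I J ∧ ¬ SepFam ![I, J] :=
  statement_1_general ℕ
end

section
/- Assume MA_{ℵ₁}. If n > 2 and Γ₀,…,Γ_{n−1} are pairwise orthogonal families of subsets of a countable set N, each of cardinality ℵ₁, then the families Γ₀,…,Γ_{n−1} are separated. -/
open Set

/-- A partial order is ccc if every antichain (set of pairwise incompatible
elements) is countable. -/
def CccOrder (P : Type*) [PartialOrder P] : Prop :=
  ∀ A : Set P, (∀ p ∈ A, ∀ q ∈ A, p ≠ q → ¬ ∃ r, r ≤ p ∧ r ≤ q) → A.Countable

/-- A filter on a partial order: nonempty, upward closed, downward directed. -/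
def PosetFilter {P : Type*} [PartialOrder P] (G : Set P) : Prop :=
  G.Nonempty ∧ (∀ p ∈ G, ∀ q, p ≤ q → q ∈ G) ∧
    (∀ p ∈ G, ∀ q ∈ G, ∃ r ∈ G, r ≤ p ∧ r ≤ q)

/-- Martin's axiom at ℵ₁: for every nonempty ccc partial order and every family of at
most ℵ₁ many dense subsets, there is a filter meeting every member of the family. -/
def MAAleph1 : Prop :=
  ∀ (P : Type) [inst : PartialOrder P], Nonempty P → CccOrder P →
    ∀ 𝒟 : Set (Set P), Cardinal.mk 𝒟 ≤ Cardinal.aleph 1 →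
      (∀ D ∈ 𝒟, ∀ p : P, ∃ q ∈ D, q ≤ p) →
      ∃ G : Set P, PosetFilter G ∧ ∀ D ∈ 𝒟, (G ∩ D).Nonempty

/-!
Enlarging the family `Γ` only makes separation easier, so three of the `Γ i` suffice. Passing to
complements, we look for a cover of `N` by sets `C i` such that `C i` is almost disjoint from every
member of `Γ i`. Force with finite pieces of such a cover together with finitely many promises
`x ∈ Γ i`, each forbidding new points of `x` from entering `C i`. By orthogonality only finitely
many points are subject to promises with different indices, and a condition is required to have
covered these already. A point still uncovered by two conditions with the same finite piece is then
forbidden at most one index by each of them, so a third index remains. Hence such conditions are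
compatible, and as there are only countably many finite pieces the order is ccc.
-/

section Cardinality

open Cardinal

theorem mk_sigma_le_of_le.{u} {ι : Type u} {f : ι → Type u} {c : Cardinal.{u}} (hc : ℵ₀ ≤ c)
    (hι : #ι ≤ c) (hf : ∀ i, #(f i) ≤ c) : #(Σ i, f i) ≤ c := by
  rw [mk_sigma]
  exact (sum_le_mk_mul_iSup _).trans (mul_le_of_le hc hι (ciSup_le' hf))

theorem nonempty_fin_embedding_of_le {α : Type*} {n : ℕ} (h : n ≤ ENat.card α) :
    Nonempty (Fin n ↪ α) := by
  rw [← lift_mk_le', mk_fin, lift_natCast, lift_uzero]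
  exact natCast_le_toENat.1 h

theorem exists_notMem_union_of_subsingleton {α : Type*} (hα : 2 < ENat.card α) {s t : Set α}
    (hs : s.Subsingleton) (ht : t.Subsingleton) : ∃ a, a ∉ s ∪ t := by
  by_contra! h
  refine hα.not_ge ?_
  calc ENat.card α = (s ∪ t).encard := by rw [eq_univ_of_forall h, encard_univ]
    _ ≤ s.encard + t.encard := encard_union_le s t
    _ ≤ 1 + 1 := add_le_add (encard_le_one_iff_subsingleton.2 hs)
      (encard_le_one_iff_subsingleton.2 ht)
    _ = 2 := one_add_one_eq_two

end Cardinality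

section MartinsAxiom

open Cardinal

theorem cccOrder_of_countable_linked {P σ : Type*} [PartialOrder P] [Countable σ] (f : P → σ)
    (hf : ∀ p q, f p = f q → ∃ r, r ≤ p ∧ r ≤ q) : CccOrder P := fun A hA =>
  (mapsTo_univ f A).countable_of_injOn
    (fun p hp q hq hpq => by_contra fun hne => hA p hp q hq hne (hf p q hpq)) (to_countable _)

theorem MAAleph1.exists_posetFilter (hMA : MAAleph1) {P α : Type} [PartialOrder P] [Nonempty P]
    (hP : CccOrder P) (hα : #α ≤ ℵ₁) (D : α → Set P) (hD : ∀ a p, ∃ q ≤ p, q ∈ D a) :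
    ∃ G : Set P, PosetFilter G ∧ ∀ a, (G ∩ D a).Nonempty := by
  obtain ⟨G, hG, hGD⟩ := hMA P ‹_› hP (range D) (mk_range_le.trans hα)
    (forall_mem_range.2 fun a p => (hD a p).imp fun _ => And.symm)
  exact ⟨G, hG, fun a => hGD (D a) (mem_range_self a)⟩

end MartinsAxiom

section Separation

variable {N ι : Type*} {Γ : ι → Set (Set N)}

theorem SepFam.of_iUnion_eq_univ {C : ι → Set N} (hC : ⋃ i, C i = univ)
    (hΓ : ∀ i, ∀ x ∈ Γ i, (x ∩ C i).Finite) : SepFam Γ := by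
  refine ⟨fun i => (C i)ᶜ, fun i x hx => ?_, ?_⟩
  · rw [sdiff_compl]
    exact hΓ i x hx
  · rw [← compl_iUnion, hC, compl_univ]
    exact finite_empty

theorem SepFam.of_comp {κ : Type*} {e : κ → ι} (he : e.Injective) (h : SepFam (Γ ∘ e)) :
    SepFam Γ := by
  obtain ⟨a, ha, hfin⟩ := h
  refine ⟨Function.extend e a fun _ => univ, fun i x hx => ?_, hfin.subset ?_⟩
  · by_cases hi : ∃ k, e k = i
    · obtain ⟨k, rfl⟩ := hi
      rw [he.extend_apply]
      exact ha k x hx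
    · rw [Function.extend_apply' _ _ _ hi, sdiff_univ]
      exact finite_empty
  · refine subset_iInter fun k => ?_
    simpa only [he.extend_apply] using iInter_subset (Function.extend e a fun _ => univ) (e k)

end Separation

section Labels

variable {N ι κ : Type*} {X : κ → Set N} {l : κ → ι}

/-- For sets `X k` carrying labels `l k`, the labels of those sets with `k ∈ F` that contain `m`:
the indices which promises about the `X k` with `k ∈ F` forbid to the point `m`. -/
def labelsAt (X : κ → Set N) (l : κ → ι) (F : Set κ) (m : N) : Set ι := l '' {k ∈ F | m ∈ X k}

theorem mem_labelsAt_of_mem {F : Set κ} {k : κ} {m : N} (hk : k ∈ F) (hm : m ∈ X k) :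
    l k ∈ labelsAt X l F m :=
  mem_image_of_mem l ⟨hk, hm⟩

theorem labelsAt_mono {F G : Set κ} (h : F ⊆ G) (m : N) : labelsAt X l F m ⊆ labelsAt X l G m :=
  image_mono fun _ hk => ⟨h hk.1, hk.2⟩

theorem labelsAt_union (F G : Set κ) (m : N) :
    labelsAt X l (F ∪ G) m = labelsAt X l F m ∪ labelsAt X l G m := by
  rw [labelsAt, labelsAt, labelsAt, ← image_union, ← sep_union]
  rfl

theorem subsingleton_labelsAt {F : Set κ} (hF : F.Subsingleton) (m : N) :
    (labelsAt X l F m).Subsingleton :=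
  (hF.anti (sep_subset _ _)).image l

theorem finite_setOf_nontrivial_labelsAt (hX : ∀ j k, l j ≠ l k → (X j ∩ X k).Finite)
    {F : Set κ} (hF : F.Finite) : {m | (labelsAt X l F m).Nontrivial}.Finite := by
  have hpairs : {jk ∈ F ×ˢ F | l jk.1 ≠ l jk.2}.Finite := (hF.prod hF).sep _
  refine (hpairs.biUnion fun jk hjk => hX jk.1 jk.2 hjk.2).subset ?_
  rintro m ⟨_, ⟨j, ⟨hj, hmj⟩, rfl⟩, _, ⟨k, ⟨hk, hmk⟩, rfl⟩, hne⟩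
  exact mem_biUnion (x := (j, k)) ⟨⟨hj, hk⟩, hne⟩ ⟨hmj, hmk⟩

end Labels

/-- The forcing conditions for a cover of `N` by sets `C i` such that `X k ∩ C (l k)` is finite for
all `k`. A pair `(m, i)` in `graph` decides `m ∈ C i`; an index `k` in `promises` bars all pairs
`(m, l k)` with `m ∈ X k` from being added later on. -/
@[ext]
structure CoverCond {N ι κ : Type*} (X : κ → Set N) (l : κ → ι) where
  graph : Finset (N × ι)
  promises : Finset κ
  exists_mem_graph :
    ∀ m, (labelsAt X l (promises : Set κ) m).Nontrivial → ∃ i, (m, i) ∈ graph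

namespace CoverCond

variable {N ι κ : Type*} {X : κ → Set N} {l : κ → ι}

instance : PartialOrder (CoverCond X l) where
  le q p := p.graph ⊆ q.graph ∧ p.promises ⊆ q.promises ∧
    ∀ x ∈ q.graph, x ∈ p.graph ∨ x.2 ∉ labelsAt X l p.promises x.1
  le_refl p := ⟨subset_rfl, subset_rfl, fun _ => Or.inl⟩
  le_trans r q p hrq hqp := ⟨hqp.1.trans hrq.1, hqp.2.1.trans hrq.2.1, fun x hx =>
    (hrq.2.2 x hx).elim (hqp.2.2 x) fun h => Or.inr fun hp => h (labelsAt_mono hqp.2.1 x.1 hp)⟩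
  le_antisymm p q hpq hqp :=
    CoverCond.ext (hqp.1.antisymm hpq.1) (hqp.2.1.antisymm hpq.2.1)

instance : Nonempty (CoverCond X l) :=
  ⟨⟨∅, ∅, fun m h => (h.not_subsingleton (by simp [labelsAt])).elim⟩⟩

theorem exists_mem_graph_or_notMem_labelsAt (hι : 2 < ENat.card ι) {p q : CoverCond X l}
    (hpq : p.graph = q.graph) (m : N) :
    ∃ i, (m, i) ∈ p.graph ∨ i ∉ labelsAt X l (p.promises ∪ q.promises) m := by
  by_cases hm : ∃ i, (m, i) ∈ p.graph
  · exact hm.imp fun _ => Or.inl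
  have hp : (labelsAt X l p.promises m).Subsingleton :=
    not_nontrivial_iff.1 (mt (p.exists_mem_graph m) hm)
  have hq : (labelsAt X l q.promises m).Subsingleton :=
    not_nontrivial_iff.1 (mt (q.exists_mem_graph m) (hpq ▸ hm))
  rw [labelsAt_union]
  exact (exists_notMem_union_of_subsingleton hι hp hq).imp fun _ => Or.inr

theorem exists_le_le_of_graph_eq [Finite ι] (hι : 2 < ENat.card ι)
    (hX : ∀ j k, l j ≠ l k → (X j ∩ X k).Finite) {p q : CoverCond X l} (hpq : p.graph = q.graph)
    {T : Set N} (hT : T.Finite) : ∃ r, r ≤ p ∧ r ≤ q ∧ ∀ m ∈ T, ∃ i, (m, i) ∈ r.graph := by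
  classical
  let L := labelsAt X l (p.promises ∪ q.promises)
  let S := T ∪ {m | (L m).Nontrivial}
  have hS : S.Finite := hT.union <|
    finite_setOf_nontrivial_labelsAt hX (p.promises.finite_toSet.union q.promises.finite_toSet)
  have hnew : {x : N × ι | x.1 ∈ S ∧ x.2 ∉ L x.1}.Finite :=
    (hS.prod finite_univ).subset fun x hx => ⟨hx.1, mem_univ x.2⟩
  have hcover : ∀ m ∈ S, ∃ i, (m, i) ∈ p.graph ∪ hnew.toFinset := by
    intro m hm
    obtain ⟨i, hi⟩ := exists_mem_graph_or_notMem_labelsAt hι hpq m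
    exact ⟨i, Finset.mem_union.2 (hi.imp_right fun h => hnew.mem_toFinset.2 ⟨hm, h⟩)⟩
  have hallowed : ∀ F ⊆ (p.promises ∪ q.promises : Set κ), ∀ x ∈ p.graph ∪ hnew.toFinset,
      x ∈ p.graph ∨ x.2 ∉ labelsAt X l F x.1 := fun F hF x hx =>
    (Finset.mem_union.1 hx).imp_right fun h hxF =>
      (hnew.mem_toFinset.1 h).2 (labelsAt_mono hF x.1 hxF)
  let r : CoverCond X l := ⟨p.graph ∪ hnew.toFinset, p.promises ∪ q.promises, fun m hm =>
    hcover m (Or.inr (by rwa [Finset.coe_union] at hm))⟩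
  refine ⟨r, ⟨Finset.subset_union_left, Finset.subset_union_left, ?_⟩,
    ⟨hpq ▸ Finset.subset_union_left, Finset.subset_union_right, ?_⟩,
    fun m hm => hcover m (Or.inl hm)⟩
  · exact hallowed p.promises subset_union_left
  · exact hpq ▸ hallowed q.promises subset_union_right

theorem cccOrder [Countable N] [Finite ι] (hι : 2 < ENat.card ι)
    (hX : ∀ j k, l j ≠ l k → (X j ∩ X k).Finite) : CccOrder (CoverCond X l) :=
  cccOrder_of_countable_linked graph fun _ _ hpq =>
    let ⟨r, hrp, hrq, _⟩ := exists_le_le_of_graph_eq hι hX hpq finite_empty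
    ⟨r, hrp, hrq⟩

theorem exists_le_mem_graph [Finite ι] (hι : 2 < ENat.card ι)
    (hX : ∀ j k, l j ≠ l k → (X j ∩ X k).Finite) (m : N) (p : CoverCond X l) :
    ∃ q ≤ p, ∃ i, (m, i) ∈ q.graph :=
  let ⟨r, hrp, _, hr⟩ := exists_le_le_of_graph_eq hι hX (p := p) (q := p) rfl
    (finite_singleton m)
  ⟨r, hrp, hr m rfl⟩

theorem exists_le_mem_promises [Finite ι] (hι : 2 < ENat.card ι)
    (hX : ∀ j k, l j ≠ l k → (X j ∩ X k).Finite) (k : κ) (p : CoverCond X l) :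
    ∃ q ≤ p, k ∈ q.promises := by
  let q : CoverCond X l := ⟨p.graph, {k}, fun m hm => (hm.not_subsingleton <| by
    rw [Finset.coe_singleton]
    exact subsingleton_labelsAt subsingleton_singleton m).elim⟩
  obtain ⟨r, hrp, hrq, -⟩ := exists_le_le_of_graph_eq hι hX (p := p) (q := q) rfl finite_empty
  exact ⟨r, hrp, hrq.2.1 (Finset.mem_singleton_self k)⟩

/-- The `i`-th set of the cover of `N` decided by a filter `G` of conditions. -/
def genericSet (G : Set (CoverCond X l)) (i : ι) : Set N := {m | ∃ p ∈ G, (m, i) ∈ p.graph}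

theorem finite_inter_genericSet {G : Set (CoverCond X l)} (hG : PosetFilter G)
    {p : CoverCond X l} (hp : p ∈ G) {k : κ} (hk : k ∈ p.promises) :
    (X k ∩ genericSet G (l k)).Finite := by
  refine (p.graph.finite_toSet.image Prod.fst).subset ?_
  rintro m ⟨hm, q, hq, hmq⟩
  obtain ⟨r, -, hrp, hrq⟩ := hG.2.2 p hp q hq
  have hmp : (m, l k) ∈ p.graph :=
    (hrp.2.2 _ (hrq.1 hmq)).resolve_right (not_not_intro (mem_labelsAt_of_mem hk hm))
  exact mem_image_of_mem Prod.fst hmp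

end CoverCond

section MartinsAxiom

open Cardinal

theorem MAAleph1.exists_cover (hMA : MAAleph1) {N ι κ : Type} [Countable N] [Finite ι]
    (hι : 2 < ENat.card ι) (hκ : #κ ≤ ℵ₁) {X : κ → Set N} {l : κ → ι}
    (hX : ∀ j k, l j ≠ l k → (X j ∩ X k).Finite) :
    ∃ C : ι → Set N, ⋃ i, C i = Set.univ ∧ ∀ k, (X k ∩ C (l k)).Finite := by
  have hcard : #(N ⊕ κ) ≤ ℵ₁ := by
    rw [mk_sum, lift_id, lift_id]
    exact add_le_of_le (aleph0_le_aleph 1) (mk_le_aleph0.trans (aleph0_le_aleph 1)) hκ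
  obtain ⟨G, hG, hGD⟩ := hMA.exists_posetFilter (CoverCond.cccOrder hι hX) hcard
    (Sum.elim (fun m => {p | ∃ i, (m, i) ∈ p.graph}) fun k => {p | k ∈ p.promises})
    (Sum.rec (CoverCond.exists_le_mem_graph hι hX) (CoverCond.exists_le_mem_promises hι hX))
  refine ⟨CoverCond.genericSet G, eq_univ_of_forall fun m => ?_, fun k => ?_⟩
  · obtain ⟨p, hp, i, hi⟩ := hGD (Sum.inl m)
    exact mem_iUnion.2 ⟨i, p, hp, hi⟩
  · obtain ⟨p, hp, hk⟩ := hGD (Sum.inr k)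
    exact CoverCond.finite_inter_genericSet hG hp hk

theorem statement_2_general (hMA : MAAleph1) {ι : Type*} (hι : 2 < ENat.card ι) {N : Type}
    [Countable N] (Γ : ι → Set (Set N)) (hcard : ∀ i, #(Γ i) ≤ ℵ₁)
    (horth : ∀ i j, i ≠ j → OrthFam (Γ i) (Γ j)) : SepFam Γ := by
  obtain ⟨e⟩ : Nonempty (Fin 3 ↪ ι) := nonempty_fin_embedding_of_le (Order.add_one_le_of_lt hι)
  have hκ : #(Σ i, Γ (e i)) ≤ ℵ₁ := mk_sigma_le_of_le (aleph0_le_aleph 1)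
    (mk_le_aleph0.trans (aleph0_le_aleph 1)) fun i => hcard (e i)
  obtain ⟨C, hC, hfin⟩ := hMA.exists_cover (by norm_num) hκ
    (X := fun k : Σ i, Γ (e i) => (k.2 : Set N)) (l := Sigma.fst)
    fun j k hjk => horth _ _ (e.injective.ne hjk) _ j.2.2 _ k.2.2
  exact .of_comp e.injective (.of_iUnion_eq_univ hC fun i x hx => hfin ⟨i, x, hx⟩)

end MartinsAxiom

/-- under MA_{ℵ₁}, if n > 2 and Γ₀,…,Γ_{n−1} are pairwise orthogonal
families of subsets of a countable set N, each of cardinality ℵ₁, then they are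
separated. -/
theorem statement_2 (hMA : MAAleph1) (n : ℕ) (hn : 2 < n)
    (N : Type) [Countable N] [Infinite N] (Γ : Fin n → Set (Set N))
    (hcard : ∀ i, Cardinal.mk (Γ i) = Cardinal.aleph 1)
    (horth : ∀ i j, i ≠ j → OrthFam (Γ i) (Γ j)) :
    SepFam Γ :=
  statement_2_general hMA (by simpa using hn) Γ (fun i => (hcard i).le) horth
end

section
/- For every n ≥ 2, the collection 𝒞ⁿ = {𝒞ⁿ_i : i < n}, where 𝒞ⁿ_i is the family of all [i]-chains of the n-adic tree n^{<ω}, is an n-gap: the families 𝒞ⁿ_i are infinitely hereditary and pairwise orthogonal, any choice of x_i ∈ 𝒞ⁿ_i (i < n) has finite intersection, and the families {𝒞ⁿ_i : i < n} are not separated. -/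
open Set

/-!
An `[i]`-chain is an increasing sequence for the strict order "`t` is `s` followed by `i` and then
by letters `≤ i`". An infinite subset of it is enumerated by a subsequence, and two comparable
nodes determine the letter that follows the smaller one, so chains with different indices share at
most one node.

Suppose now that `a i` almost contains every `[i]`-chain. Outside `a i` the order then has no
infinite increasing sequence. So, unless the whole cone of extensions of a node by letters `≤ i`
lies in `a i`, it has a maximal node `m` outside `a i`, and the cone above `m⌢i` lies in `a i`.
Applying this to the letters in decreasing order produces cones, each inside the previous one since
the alphabets shrink, and the tip of the last one lies in every `a i`. Hence `⋂ i, a i` contains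
nodes above every node of the tree.
-/

section Sequences

variable {β : Type*} {r : β → β → Prop} [IsTrans β r] {x : ℕ → β}

lemma pairwise_range_of_forall_rel_succ (hx : ∀ k, r (x k) (x (k + 1))) :
    (range x).Pairwise fun s t => r s t ∨ r t s := by
  rintro _ ⟨k, rfl⟩ _ ⟨m, rfl⟩ hkm
  rcases lt_or_gt_of_ne (ne_of_apply_ne x hkm) with h | h
  · exact Or.inl (Nat.rel_of_forall_rel_succ_of_lt r hx h)
  · exact Or.inr (Nat.rel_of_forall_rel_succ_of_lt r hx h)

lemma exists_eq_range_forall_rel_succ_of_infinite (hx : ∀ k, r (x k) (x (k + 1))) {Y : Set β}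
    (hYx : Y ⊆ range x) (hY : Y.Infinite) :
    ∃ y : ℕ → β, Y = range y ∧ ∀ k, r (y k) (y (k + 1)) := by
  have hinf : {k | x k ∈ Y}.Infinite := hY.preimage hYx
  refine ⟨x ∘ Nat.nth fun k => x k ∈ Y, ?_, fun k =>
    Nat.rel_of_forall_rel_succ_of_lt r hx (Nat.nth_strictMono hinf k.lt_succ_self)⟩
  rw [range_comp, Nat.range_nth_of_infinite hinf]
  exact (image_preimage_eq_of_subset hYx).symm

end Sequences

lemma infinite_of_forall_exists_prefix {α : Type*} [Nonempty α] {A : Set (List α)}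
    (hA : ∀ s, ∃ t ∈ A, s <+: t) : A.Infinite := by
  inhabit α
  refine Infinite.of_image List.length (infinite_of_forall_exists_gt fun k => ?_)
  obtain ⟨t, htA, hst⟩ := hA (List.replicate (k + 1) default)
  exact ⟨t.length, mem_image_of_mem _ htA, by simpa using hst.length_le⟩

section Cones

variable {α : Type*} {L M : Set α} {s t : List α}

/-- The cone above the node `s` over the alphabet `L`: all nodes obtained by appending to `s` a
finite word with letters in `L`. -/
def wordCone (L : Set α) (s : List α) : Set (List α) :=
  {t | ∃ w : List α, (∀ j ∈ w, j ∈ L) ∧ t = s ++ w}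

lemma self_mem_wordCone : s ∈ wordCone L s :=
  ⟨[], by simp, by simp⟩

lemma prefix_of_mem_wordCone (ht : t ∈ wordCone L s) : s <+: t := by
  obtain ⟨w, -, rfl⟩ := ht
  exact List.prefix_append s w

lemma wordCone_mono (hLM : L ⊆ M) : wordCone L s ⊆ wordCone M s :=
  fun _ ⟨w, hw, ht⟩ => ⟨w, fun j hj => hLM (hw j hj), ht⟩

lemma wordCone_subset_of_mem (ht : t ∈ wordCone L s) : wordCone L t ⊆ wordCone L s := by
  obtain ⟨w, hw, rfl⟩ := ht
  rintro _ ⟨v, hv, rfl⟩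
  exact ⟨w ++ v, List.forall_mem_append.2 ⟨hw, hv⟩, List.append_assoc s w v⟩

lemma append_singleton_mem_wordCone {i : α} (hi : i ∈ L) (ht : t ∈ wordCone L s) :
    t ++ [i] ∈ wordCone L s :=
  wordCone_subset_of_mem ht ⟨[i], by simpa using hi, rfl⟩

end Cones

/-- The successor relation of `[i]`-chains: `t = s⌢i⌢w` with all entries of `w` at most `i`.
It is spelled so that `BChain i X` unfolds to `X` being the range of a sequence whose consecutive
terms are so related. -/
def BracketExt {α : Type*} [LE α] (i : α) (s t : List α) : Prop :=
  ∃ w : List α, (∀ j ∈ w, j ≤ i) ∧ t = s ++ i :: w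

namespace BracketExt

variable {α : Type*} {i j : α} {s t u : List α}

lemma of_mem_wordCone [Preorder α] (ht : t ∈ wordCone (Iic i) (s ++ [i])) : BracketExt i s t := by
  obtain ⟨w, hw, rfl⟩ := ht
  exact ⟨w, hw, (List.append_cons s i w).symm⟩

lemma length_lt [LE α] (h : BracketExt i s t) : s.length < t.length := by
  obtain ⟨w, -, rfl⟩ := h
  simp

lemma index_unique [LE α] (hi : BracketExt i s t) (hj : BracketExt j s t) : i = j := by
  obtain ⟨w, -, rfl⟩ := hi
  obtain ⟨v, -, hwv⟩ := hj
  exact (List.cons.inj (List.append_cancel_left hwv)).1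

lemma trans [Preorder α] (hst : BracketExt i s t) (htu : BracketExt i t u) :
    BracketExt i s u := by
  obtain ⟨w, hw, rfl⟩ := hst
  obtain ⟨v, hv, rfl⟩ := htu
  exact ⟨w ++ i :: v, List.forall_mem_append.2 ⟨hw, List.forall_mem_cons.2 ⟨le_rfl, hv⟩⟩, by simp⟩

instance [Preorder α] : IsTrans (List α) (BracketExt i) :=
  ⟨fun _ _ _ => trans⟩

lemma injective_of_forall_succ [LE α] {x : ℕ → List α}
    (hx : ∀ k, BracketExt i (x k) (x (k + 1))) : Function.Injective x :=
  have hmono : StrictMono (List.length ∘ x) := strictMono_nat_of_lt_succ fun k => (hx k).length_lt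
  hmono.injective.of_comp

end BracketExt

section Density

variable {α : Type*}

lemma exists_wordCone_Iic_subset [Preorder α] {i : α} {A : Set (List α)}
    (hA : ∀ x : ℕ → List α, (∀ k, BracketExt i (x k) (x (k + 1))) → ∃ k, x k ∈ A) (s : List α) :
    ∃ t ∈ wordCone (Iic i) s, wordCone (Iic i) t ⊆ A := by
  have hwf : WellFounded fun t u : (Aᶜ : Set (List α)) => BracketExt i u t := by
    refine wellFounded_iff_isEmpty_descending_chain.2 ⟨fun ⟨x, hx⟩ => ?_⟩
    obtain ⟨k, hk⟩ := hA (fun k => x k) hx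
    exact (x k).2 hk
  by_cases hs : wordCone (Iic i) s ⊆ A
  · exact ⟨s, self_mem_wordCone, hs⟩
  obtain ⟨u, hsu, huA⟩ := not_subset.1 hs
  obtain ⟨m, hsm, hmax⟩ :=
    hwf.has_min {t | (t : List α) ∈ wordCone (Iic i) s} ⟨⟨u, huA⟩, hsu⟩
  have hsmi : m ++ [i] ∈ wordCone (Iic i) s := append_singleton_mem_wordCone self_mem_Iic hsm
  refine ⟨m ++ [i], hsmi, fun t ht => ?_⟩
  by_contra htA
  exact hmax ⟨t, htA⟩ (wordCone_subset_of_mem hsmi ht) (.of_mem_wordCone ht)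

lemma exists_prefix_forall_wordCone_lowerBounds_subset [LinearOrder α] {a : α → Set (List α)}
    (ha : ∀ i, ∀ x : ℕ → List α, (∀ k, BracketExt i (x k) (x (k + 1))) → ∃ k, x k ∈ a i)
    (S : Finset α) (s : List α) :
    ∃ t, s <+: t ∧ ∀ j ∈ S, wordCone (lowerBounds S) t ⊆ a j := by
  induction S using Finset.induction_on_min with
  | empty => exact ⟨s, List.prefix_rfl, by simp⟩
  | insert i S hiS ih =>
    obtain ⟨t, hst, ht⟩ := ih
    obtain ⟨u, htu, hu⟩ := exists_wordCone_Iic_subset (ha i) t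
    have hi : i ∈ lowerBounds (S : Set α) := fun j hj => (hiS j hj).le
    have hIic : Iic i ⊆ lowerBounds (S : Set α) := fun j hj => lowerBounds_mono_mem hj hi
    have hinsert : lowerBounds ((insert i S : Finset α) : Set α) ⊆ Iic i := fun j hj =>
      hj (Finset.mem_insert_self i S)
    refine ⟨u, hst.trans (prefix_of_mem_wordCone htu), fun j hj => ?_⟩
    rcases Finset.mem_insert.1 hj with rfl | hjS
    · exact (wordCone_mono hinsert).trans hu
    · calc
        wordCone (lowerBounds ((insert i S : Finset α) : Set α)) u
          ⊆ wordCone (Iic i) u := wordCone_mono hinsert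
        _ ⊆ wordCone (Iic i) t := wordCone_subset_of_mem htu
        _ ⊆ wordCone (lowerBounds S) t := wordCone_mono hIic
        _ ⊆ a j := ht j hjS

lemma infinite_iInter_of_forall_bracketExt_seq [LinearOrder α] [Finite α] [Nonempty α]
    {a : α → Set (List α)}
    (ha : ∀ i, ∀ x : ℕ → List α, (∀ k, BracketExt i (x k) (x (k + 1))) → ∃ k, x k ∈ a i) :
    (⋂ i, a i).Infinite := by
  have := Fintype.ofFinite α
  refine infinite_of_forall_exists_prefix fun s => ?_
  obtain ⟨t, hst, ht⟩ := exists_prefix_forall_wordCone_lowerBounds_subset ha Finset.univ s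
  exact ⟨t, mem_iInter.2 fun j => ht j (Finset.mem_univ j) self_mem_wordCone, hst⟩

end Density

namespace BChain

variable {n : ℕ} {i j : Fin n} {X Y : Set (List (Fin n))}

lemma of_infinite_subset (hX : BChain i X) (hYX : Y ⊆ X) (hY : Y.Infinite) : BChain i Y := by
  obtain ⟨x, rfl, hx⟩ := hX
  exact exists_eq_range_forall_rel_succ_of_infinite (r := BracketExt i) hx hYX hY

lemma pairwise_bracketExt (hX : BChain i X) :
    X.Pairwise fun s t => BracketExt i s t ∨ BracketExt i t s := by
  obtain ⟨x, rfl, hx⟩ := hX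
  exact pairwise_range_of_forall_rel_succ hx

lemma inter_subsingleton (hX : BChain i X) (hY : BChain j Y) (hij : i ≠ j) :
    (X ∩ Y).Subsingleton := by
  intro s hs t ht
  by_contra hst
  wlog hi : BracketExt i s t generalizing s t
  · exact this ht hs (Ne.symm hst) ((hX.pairwise_bracketExt hs.1 ht.1 hst).resolve_left hi)
  rcases hY.pairwise_bracketExt hs.2 ht.2 hst with hj | hj
  · exact hij (hi.index_unique hj)
  · exact hi.length_lt.asymm hj.length_lt

end BChain

lemma not_sepFam_bChain {n : ℕ} [NeZero n] : ¬ SepFam fun i : Fin n => {X | BChain i X} := by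
  rintro ⟨a, ha, hfin⟩
  refine infinite_iInter_of_forall_bracketExt_seq (fun i x hx => ?_) hfin
  have hinf : (range x).Infinite :=
    infinite_range_of_injective (BracketExt.injective_of_forall_succ hx)
  by_contra! hxa
  have hdiff : range x ⊆ range x \ a i := forall_mem_range.2 fun k => ⟨mem_range_self k, hxa k⟩
  exact hinf ((ha i (range x) ⟨x, rfl, hx⟩).subset hdiff)

/-- for n ≥ 2, the families 𝒞ⁿ_i of [i]-chains of the n-adic tree
form an n-gap: infinitely hereditary, pairwise orthogonal, choices have finite
intersection, and the families are not separated. -/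
theorem statement_3 (n : ℕ) (hn : 2 ≤ n) :
    (∀ i : Fin n, HerFam {X | BChain i X}) ∧
    (∀ i j : Fin n, i ≠ j → OrthFam {X | BChain i X} {X | BChain j X}) ∧
    (∀ x : Fin n → Set (List (Fin n)), (∀ i, BChain i (x i)) → (⋂ i, x i).Finite) ∧
    ¬ SepFam (fun i : Fin n => {X | BChain i X}) := by
  have : Nontrivial (Fin n) := Fin.nontrivial_iff_two_le.2 hn
  have : NeZero n := ⟨by lia⟩
  refine ⟨fun i X hX Y hYX hY => BChain.of_infinite_subset hX hYX hY,
    fun i j hij X hX Y hY => (BChain.inter_subsingleton hX hY hij).finite,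
    fun x hx => ?_, not_sepFam_bChain⟩
  obtain ⟨i, j, hij⟩ := exists_pair_ne (Fin n)
  exact ((hx i).inter_subsingleton (hx j) hij).finite.subset
    (subset_inter (iInter_subset x i) (iInter_subset x j))
end

section
/- For every n ≥ 2, the collection 𝒮ⁿ = {𝒮ⁿ_i : i < n}, where 𝒮ⁿ_i is the family of all i-chains of the n-adic tree n^{<ω}, is a strong n-gap: the families 𝒮ⁿ_i are infinitely hereditary and pairwise orthogonal, any choice of x_i ∈ 𝒮ⁿ_i (i < n) has finite intersection, and the families {𝒮ⁿ_i : i < n} are not countably separated. -/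
open Set

/-!
Two distinct nodes of an `i`-chain satisfy `s⌢i ≤ t` or `t⌢i ≤ s`, and since this relation increases
length, the `i`-chains are exactly the infinite sets with this property; hence heredity. Two common
nodes `s`, `t` of an `i`-chain and a `j`-chain would give `s⌢i ≤ t` and `s⌢j ≤ t`, so `i = j`.

Against countable separation one takes a branch generic for countably many dense requirements: it
turns in every direction `i` infinitely often, and for each candidate tuple `c` with `⋂ i, c i = ∅`
it turns in some direction `i` at a node outside `c i`. The nodes at which it turns in direction `i`
form an `i`-chain for each `i`, and no candidate tuple separates these chains.
-/

section InfiniteChains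

variable {β : Type*} {r : β → β → Prop}

/-- The family of infinite chains of a relation. For `r s t := s⌢i ≤ t` these are the `i`-chains,
described without an enumeration. -/
def infiniteChains (r : β → β → Prop) : Set (Set β) := {X | X.Infinite ∧ IsChain r X}

theorem herFam_infiniteChains (r : β → β → Prop) : HerFam (infiniteChains r) :=
  fun _ hX _ hYX hY => ⟨hY, hX.2.mono hYX⟩

theorem range_mem_infiniteChains [IsTrans β r] {rank : β → ℕ}
    (hrank : ∀ a b, r a b → rank a < rank b) {x : ℕ → β} (hx : ∀ k, r (x k) (x (k + 1))) :
    range x ∈ infiniteChains r := by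
  have hlt : ∀ {k m}, k < m → r (x k) (x m) := fun h => Nat.rel_of_forall_rel_succ_of_lt r hx h
  have hmono : StrictMono (rank ∘ x) := fun _ _ h => hrank _ _ (hlt h)
  refine ⟨infinite_range_of_injective hmono.injective.of_comp, ?_⟩
  rintro _ ⟨k, rfl⟩ _ ⟨m, rfl⟩ hne
  exact (ne_of_apply_ne x hne).lt_or_gt.imp hlt hlt

theorem exists_eq_range_of_mem_infiniteChains {rank : β → ℕ}
    (hrank : ∀ a b, r a b → rank a < rank b) {X : Set β} (hX : X ∈ infiniteChains r) :
    ∃ x : ℕ → β, X = range x ∧ ∀ k, r (x k) (x (k + 1)) := by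
  obtain ⟨hinf, hchain⟩ := hX
  have hinj : InjOn rank X := fun a ha b hb hab => by
    by_contra hne
    exact (hchain ha hb hne).elim (fun h => (hrank a b h).ne hab) fun h => (hrank b a h).ne' hab
  have hranks : (rank '' X).Infinite := hinf.image hinj
  choose x hxX hx using fun k => Nat.nth_mem_of_infinite (p := (· ∈ rank '' X)) hranks k
  refine ⟨x, Subset.antisymm (fun a ha => ?_) (range_subset_iff.2 hxX), fun k => ?_⟩
  · obtain ⟨k, hk⟩ : rank a ∈ range (Nat.nth (· ∈ rank '' X)) :=
      (Nat.range_nth_of_infinite hranks).ge (mem_image_of_mem rank ha)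
    exact ⟨k, hinj (hxX k) ha ((hx k).trans hk)⟩
  · have hlt : rank (x k) < rank (x (k + 1)) := by
      rw [hx, hx]
      exact Nat.nth_strictMono hranks k.lt_succ_self
    exact (hchain (hxX k) (hxX (k + 1)) fun h => hlt.ne (congrArg rank h)).resolve_right
      fun h => (hrank _ _ h).not_gt hlt

theorem mem_infiniteChains_iff_exists_range [IsTrans β r] {rank : β → ℕ}
    (hrank : ∀ a b, r a b → rank a < rank b) {X : Set β} :
    X ∈ infiniteChains r ↔ ∃ x : ℕ → β, X = range x ∧ ∀ k, r (x k) (x (k + 1)) := by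
  refine ⟨exists_eq_range_of_mem_infiniteChains hrank, ?_⟩
  rintro ⟨x, rfl, hx⟩
  exact range_mem_infiniteChains hrank hx

/-- The Rasiowa–Sikorski lemma, with a chain in place of a filter. -/
theorem exists_isChain_forall_exists_mem [Nonempty β] [Std.Refl r] [IsTrans β r] {ι : Type*}
    [Countable ι] {D : ι → Set β} (hD : ∀ k s, ∃ t ∈ D k, r s t) :
    ∃ G : Set β, IsChain r G ∧ ∀ k, ∃ t ∈ G, t ∈ D k := by
  let _ : Preorder β := { le := r, le_refl := refl_of r, le_trans := fun _ _ _ => trans_of r }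
  have := Encodable.ofCountable ι
  let D' : ι → Order.Cofinal β := fun k => ⟨D k, hD k⟩
  let x : ℕ → β := Order.sequenceOfCofinals (Classical.arbitrary β) D'
  have hx : Monotone x := Order.sequenceOfCofinals.monotone _ _
  exact ⟨range x, hx.isChain_range, fun k =>
    ⟨x (Encodable.encode k + 1), mem_range_self _, Order.sequenceOfCofinals.encode_mem _ D' k⟩⟩

end InfiniteChains

section Tree

variable {α : Type*} {i j : α} {s t u : List α}

/-- The relation `s⌢i ≤ t` between nodes of the tree of finite sequences over an alphabet. -/
def ConcatPrefix (i : α) (s t : List α) : Prop := s ++ [i] <+: t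

namespace ConcatPrefix

theorem isPrefix (h : ConcatPrefix i s t) : s <+: t := (List.prefix_append s [i]).trans h

theorem length_lt (h : ConcatPrefix i s t) : s.length < t.length := by
  simpa [Nat.succ_le_iff] using List.IsPrefix.length_le h

theorem trans_isPrefix (h : ConcatPrefix i s t) (htu : t <+: u) : ConcatPrefix i s u :=
  List.IsPrefix.trans h htu

instance : IsTrans (List α) (ConcatPrefix i) where
  trans _ _ _ hst htu := hst.trans_isPrefix htu.isPrefix

theorem of_length_lt (hs : ConcatPrefix i s u) (ht : t <+: u) (hlt : s.length < t.length) :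
    ConcatPrefix i s t :=
  List.prefix_of_prefix_length_le hs ht (by simpa using hlt)

theorem direction_unique (hi : ConcatPrefix i s t) (hj : ConcatPrefix j s t) : i = j := by
  have hprefix : s ++ [i] <+: s ++ [j] := List.prefix_of_prefix_length_le hi hj (by simp)
  simpa using hprefix.eq_of_length (by simp)

theorem or_of_ne (hs : ConcatPrefix i s u) (ht : ConcatPrefix i t u) (hne : s ≠ t) :
    ConcatPrefix i s t ∨ ConcatPrefix i t s := by
  rcases lt_trichotomy s.length t.length with hlt | heq | hgt
  · exact .inl (hs.of_length_lt ht.isPrefix hlt)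
  · exact absurd ((List.prefix_of_prefix_length_le hs.isPrefix ht.isPrefix heq.le).eq_of_length heq)
      hne
  · exact .inr (ht.of_length_lt hs.isPrefix hgt)

end ConcatPrefix

theorem subsingleton_inter_of_isChain_concatPrefix (hij : i ≠ j) {X Y : Set (List α)}
    (hX : IsChain (ConcatPrefix i) X) (hY : IsChain (ConcatPrefix j) Y) :
    (X ∩ Y).Subsingleton := by
  rintro s ⟨hsX, hsY⟩ t ⟨htX, htY⟩
  by_contra hne
  rcases hX hsX htX hne with hi | hi <;> rcases hY hsY htY hne with hj | hj
  · exact hij (hi.direction_unique hj)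
  · exact hi.length_lt.not_gt hj.length_lt
  · exact hi.length_lt.not_gt hj.length_lt
  · exact hij (hi.direction_unique hj)

theorem orthFam_infiniteChains_concatPrefix (hij : i ≠ j) :
    OrthFam (infiniteChains (ConcatPrefix i)) (infiniteChains (ConcatPrefix j)) :=
  fun _ hX _ hY => (subsingleton_inter_of_isChain_concatPrefix hij hX.2 hY.2).finite

/-- The nodes at which the branch through `G` turns in direction `i`. The branch is encoded by any
prefix-chain `G` of nodes lying on it. -/
def turnNodes (i : α) (G : Set (List α)) : Set (List α) := {s | ∃ t ∈ G, ConcatPrefix i s t}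

theorem isChain_turnNodes (i : α) {G : Set (List α)} (hG : IsChain (· <+: ·) G) :
    IsChain (ConcatPrefix i) (turnNodes i G) := by
  rintro s ⟨t, ht, hst⟩ s' ⟨t', ht', hst'⟩ hne
  rcases hG.total ht ht' with htt' | ht't
  · exact (hst.trans_isPrefix htt').or_of_ne hst' hne
  · exact hst.or_of_ne (hst'.trans_isPrefix ht't) hne

theorem turnNodes_mem_infiniteChains {G : Set (List α)} (hG : IsChain (· <+: ·) G)
    (hlong : ∀ m, ∃ s ∈ turnNodes i G, m ≤ s.length) :
    turnNodes i G ∈ infiniteChains (ConcatPrefix i) := by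
  refine ⟨.of_image List.length (infinite_of_forall_exists_gt fun m => ?_), isChain_turnNodes i hG⟩
  obtain ⟨s, hs, hms⟩ := hlong (m + 1)
  exact ⟨s.length, mem_image_of_mem _ hs, hms⟩

theorem exists_generic_turnNodes [Countable α] {T : Set (α → Set (List α))} (hT : T.Countable)
    (hempty : ∀ c ∈ T, ⋂ i, c i = ∅) :
    ∃ G : Set (List α), (∀ i, turnNodes i G ∈ infiniteChains (ConcatPrefix i)) ∧
      ∀ c ∈ T, ∃ i, ¬ turnNodes i G ⊆ c i := by
  have := hT.to_subtype
  let D : (α × ℕ) ⊕ T → Set (List α) := Sum.elim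
    (fun p => {t | ∃ s, ConcatPrefix p.1 s t ∧ p.2 ≤ s.length})
    (fun c => {t | ∃ i s, ConcatPrefix i s t ∧ s ∉ c.1 i})
  have hdense : ∀ k s, ∃ t ∈ D k, s <+: t := by
    rintro (⟨i, m⟩ | ⟨c, hc⟩) s
    · exact ⟨s ++ List.replicate m i ++ [i], ⟨_, List.prefix_rfl, by simp⟩, by simp⟩
    · obtain ⟨i, hi⟩ : ∃ i, s ∉ c i := iInter_eq_empty_iff.1 (hempty c hc) s
      exact ⟨s ++ [i], ⟨i, s, List.prefix_rfl, hi⟩, List.prefix_append _ _⟩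
  obtain ⟨G, hG, hmeet⟩ := exists_isChain_forall_exists_mem hdense
  refine ⟨G, fun i => turnNodes_mem_infiniteChains hG fun m => ?_, fun c hc => ?_⟩
  · obtain ⟨t, ht, s, hst, hms⟩ := hmeet (.inl (i, m))
    exact ⟨s, ⟨t, ht, hst⟩, hms⟩
  · obtain ⟨t, ht, i, s, hst, hs⟩ := hmeet (.inr ⟨c, hc⟩)
    exact ⟨i, fun hsub => hs (hsub ⟨t, ht, hst⟩)⟩

theorem not_cSepFam_infiniteChains_concatPrefix [Finite α] :
    ¬ CSepFam fun i : α => infiniteChains (ConcatPrefix i) := by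
  rintro ⟨C, hC, hsep⟩
  let T : Set (α → Set (List α)) := {c | (∀ i, c i ∈ C) ∧ ⋂ i, c i = ∅}
  have hT : T.Countable := (countable_pi fun _ => hC).mono fun _ hc => hc.1
  obtain ⟨G, hG, hesc⟩ := exists_generic_turnNodes hT fun _ hc => hc.2
  obtain ⟨c, hcC, hsub, hempty⟩ := hsep (turnNodes · G) hG
  obtain ⟨i, hi⟩ := hesc c ⟨hcC, hempty⟩
  exact hi (hsub i)

end Tree

theorem iChain_iff_mem_infiniteChains {n : ℕ} {i : Fin n} {X : Set (List (Fin n))} :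
    IChain i X ↔ X ∈ infiniteChains (ConcatPrefix i) :=
  (mem_infiniteChains_iff_exists_range (r := ConcatPrefix i) fun _ _ => ConcatPrefix.length_lt).symm

/-- for n ≥ 2, the families 𝒮ⁿ_i of i-chains of the n-adic tree form a
strong n-gap: infinitely hereditary, pairwise orthogonal, choices have finite
intersection, and the families are not countably separated. -/
theorem statement_4 (n : ℕ) (hn : 2 ≤ n) :
    (∀ i : Fin n, HerFam {X | IChain i X}) ∧
    (∀ i j : Fin n, i ≠ j → OrthFam {X | IChain i X} {X | IChain j X}) ∧
    (∀ x : Fin n → Set (List (Fin n)), (∀ i, IChain i (x i)) → (⋂ i, x i).Finite) ∧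
    ¬ CSepFam (fun i : Fin n => {X | IChain i X}) := by
  simp only [iChain_iff_mem_infiniteChains, ofPred_mem_eq]
  refine ⟨fun i => herFam_infiniteChains _, fun i j => orthFam_infiniteChains_concatPrefix,
    fun x hx => ?_, not_cSepFam_infiniteChains_concatPrefix⟩
  have : Nontrivial (Fin n) := Fin.nontrivial_iff_two_le.2 hn
  obtain ⟨i, j, hij⟩ := exists_pair_ne (Fin n)
  exact (orthFam_infiniteChains_concatPrefix hij _ (hx i) _ (hx j)).subset
    (subset_inter (iInter_subset x i) (iInter_subset x j))
end

section
/- If Γ = {Γ_i : i < n} is an analytic n∗-gap on a countable set N, then there exist an injective function φ : n^{<ω} → N and a permutation ε of {0,…,n−1} such that for every i < n and every [i]-chain X ⊆ n^{<ω}, the image φ(X) = {φ(s) : s ∈ X} belongs to Γ_{ε(i)}. -/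
open Set

open Topology

/-!
Call a set `A` critical if some map of the tree into `A` sends every `[i]`-chain to an infinite
member of `Γ i`. The core is a dichotomy for `k + 1` families. Parametrize the last family by the
Baire space. If, on `A`, its members are not almost covered by countably many sets that are
noncritical for the first `k` families, then removing the largest open set of parameters that can be
so covered leaves a nonempty set `E` such that every cylinder meeting `E` yields critical maps for
the first `k` families. These splice into a critical map for all of them: at each occurrence of the
last letter pass to a smaller cylinder whose sets all contain the current value.

If `A` is noncritical for all orderings of the families, then each family is thus covered by
countably many sets on which the others are separated, by induction, and these separations are glued
along a disjointification of the covers. So an inseparable system has a critical map for some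
ordering, and stretching the words of the tree makes it injective.
-/

theorem exists_fun_of_wellFounded {β γ : Type*} {r : β → β → Prop} (hr : WellFounded r)
    {P : ∀ b, (∀ a, r a b → γ) → γ → Prop} (h : ∀ b f, ∃ c, P b f c) :
    ∃ f : β → γ, ∀ b, P b (fun a _ => f a) (f b) := by
  choose F hF using h
  refine ⟨hr.fix F, fun b => ?_⟩
  rw [hr.fix_eq]
  exact hF b _

section Chains

variable {α : Type*} [Preorder α] {i j : α} {s t u : List α}

/-- One step of an `[i]`-chain: `t = s⌢i⌢w`, where every entry of `w` is `≤ i`. -/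
def BExt (i : α) (s t : List α) : Prop :=
  ∃ w : List α, (∀ j ∈ w, j ≤ i) ∧ t = s ++ i :: w

/-- The sequences of words whose ranges are the `[i]`-chains. -/
def BSeq (i : α) (x : ℕ → List α) : Prop :=
  ∀ m, BExt i (x m) (x (m + 1))

theorem bExt_append_singleton (i : α) (s : List α) : BExt i s (s ++ [i]) :=
  ⟨[], by simp, rfl⟩

theorem BExt.trans_of_le (hst : BExt i s t) (htu : BExt j t u) (hji : j ≤ i) : BExt i s u := by
  obtain ⟨v, hv, rfl⟩ := hst
  obtain ⟨w, hw, rfl⟩ := htu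
  refine ⟨v ++ j :: w, fun l hl => ?_, by simp⟩
  rcases List.mem_append.1 hl with hl | hl
  · exact hv l hl
  · rcases List.mem_cons.1 hl with rfl | hl
    · exact hji
    · exact (hw l hl).trans hji

theorem BExt.map_of_append_singleton {e : List α → List α}
    (he : ∀ i s, BExt i (e s) (e (s ++ [i]))) (h : BExt i s t) : BExt i (e s) (e t) := by
  obtain ⟨w, hw, rfl⟩ := h
  induction w using List.reverseRecOn with
  | nil => exact he i s
  | append_singleton w j ih =>
    have hstep := he j (s ++ i :: w)
    rw [List.append_assoc, List.cons_append] at hstep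
    exact (ih fun l hl => hw l (List.mem_append_left _ hl)).trans_of_le hstep (hw j (by simp))

theorem bSeq_append_replicate (i : α) (s : List α) :
    BSeq i fun m => s ++ List.replicate (m + 1) i := fun m => by
  simpa only [List.replicate_succ' (n := m + 1), List.append_assoc]
    using bExt_append_singleton i (s ++ List.replicate (m + 1) i)

theorem exists_injective_comp_of_infinite_image_bExt [Countable α] {N : Type*} {φ : List α → N}
    (hφ : ∀ i s, (φ '' {t | BExt i s t}).Infinite) :
    ∃ e : List α → List α, Function.Injective (φ ∘ e) ∧
      ∀ i s t, BExt i s t → BExt i (e s) (e t) := by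
  have := Encodable.ofCountable α
  let rank (s : List α) : ℕ := Encodable.encode s.reverse
  have rank_injective : Function.Injective rank :=
    Encodable.encode_injective.comp List.reverse_injective
  have rank_lt (s : List α) (i : α) : rank s < rank (s ++ [i]) := by
    simp only [rank, List.reverse_concat, Encodable.encode_list_cons]
    exact Nat.lt_succ_of_le (Nat.right_le_pair _ _)
  have avoid (t : List α) (f : ∀ s, rank s < rank t → List α) (T : Set (List α))
      (hT : (φ '' T).Infinite) : ∃ v ∈ T, ∀ s hs, φ v ≠ φ (f s hs) := by
    have hfin : Finite {s // rank s < rank t} :=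
      ((finite_Iio (rank t)).preimage rank_injective.injOn).to_subtype
    obtain ⟨_, ⟨v, hv, rfl⟩, hne⟩ :=
      hT.exists_notMem_finite (finite_range fun s : {s // rank s < rank t} => φ (f s.1 s.2))
    exact ⟨v, hv, fun s hs heq => hne ⟨⟨s, hs⟩, heq.symm⟩⟩
  obtain ⟨e, he⟩ := exists_fun_of_wellFounded (measure rank).wf
    (P := fun t f v => (∀ s hs, φ v ≠ φ (f s hs)) ∧
      ∀ i s (h : t = s ++ [i]), BExt i (f s (h ▸ rank_lt s i)) v) fun t f => by
    rcases t.eq_nil_or_concat' with rfl | ⟨s, i, rfl⟩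
    · exact ⟨[], fun s hs => (Nat.not_lt_zero _ hs).elim, by simp⟩
    · obtain ⟨v, hv, hne⟩ := avoid _ f _ (hφ i (f s (rank_lt s i)))
      refine ⟨v, hne, fun j u h => ?_⟩
      obtain ⟨rfl, rfl⟩ := List.append_singleton_inj.1 h
      exact hv
  refine ⟨e, fun s t hst => ?_, fun i s t =>
    BExt.map_of_append_singleton fun i s => (he (s ++ [i])).2 i s rfl⟩
  by_contra hne
  rcases lt_or_gt_of_ne (rank_injective.ne hne) with h | h
  · exact (he t).1 s h hst.symm
  · exact (he s).1 t h hst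

end Chains

section Critical

variable {N : Type*} {k : ℕ} {Γ : Fin k → Set (Set N)} {φ : List (Fin k) → N} {A B : Set N}

/-- The map `φ` of the tree `k^{<ω}` sends every `[i]`-chain to an infinite member of `Γ i`. It need
not be injective, and for `k = 0` the condition is void. -/
def IsCritical (Γ : Fin k → Set (Set N)) (φ : List (Fin k) → N) : Prop :=
  ∀ i x, BSeq i x → range (φ ∘ x) ∈ Γ i ∧ (range (φ ∘ x)).Infinite

/-- The families `Γ` are critical on `A`: some critical map takes its values in `A`. -/
def CritOn (Γ : Fin k → Set (Set N)) (A : Set N) : Prop :=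
  ∃ φ : List (Fin k) → N, (∀ s, φ s ∈ A) ∧ IsCritical Γ φ

theorem CritOn.mono (hAB : A ⊆ B) (h : CritOn Γ A) : CritOn Γ B := by
  obtain ⟨φ, hφA, hφ⟩ := h
  exact ⟨φ, fun s => hAB (hφA s), hφ⟩

theorem IsCritical.image_mem (h : IsCritical Γ φ) {i : Fin k} {X : Set (List (Fin k))}
    (hX : BChain i X) : φ '' X ∈ Γ i := by
  obtain ⟨x, rfl, hx⟩ := hX
  rw [← range_comp]
  exact (h i x hx).1

theorem IsCritical.exists_injective (h : IsCritical Γ φ) :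
    ∃ ψ : List (Fin k) → N, Function.Injective ψ ∧ IsCritical Γ ψ := by
  obtain ⟨e, he, hext⟩ := exists_injective_comp_of_infinite_image_bExt (φ := φ) fun i s => by
    refine (h i _ (bSeq_append_replicate i s)).2.mono ?_
    rintro _ ⟨m, rfl⟩
    exact mem_image_of_mem φ ⟨List.replicate m i, fun j hj => (List.eq_of_mem_replicate hj).le, rfl⟩
  exact ⟨φ ∘ e, he, fun i x hx => h i (e ∘ x) fun m => hext i _ _ (hx m)⟩

end Critical

section Splicing

variable {k : ℕ} {B : Type*} (next : B → List (Fin k) → B) {i : Fin k}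
  {s t : List (Fin (k + 1))} {x : ℕ → List (Fin (k + 1))}

/-- Reads one letter, in a state consisting of a node `b` of `B` and a word in the letters `< k`:
the letter `k` moves on from `b` and clears the word, the others are appended to the word. -/
def spliceStep (p : B × List (Fin k)) : Fin (k + 1) → B × List (Fin k) :=
  Fin.lastCases (next p.1 p.2, []) fun j => (p.1, p.2 ++ [j])

@[simp]
theorem spliceStep_last (p : B × List (Fin k)) :
    spliceStep next p (Fin.last k) = (next p.1 p.2, []) :=
  Fin.lastCases_last

@[simp]
theorem spliceStep_castSucc (p : B × List (Fin k)) (j : Fin k) :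
    spliceStep next p j.castSucc = (p.1, p.2 ++ [j]) :=
  Fin.lastCases_castSucc j

/-- The state reached from the node `b` by reading the word `s`. -/
def splice (b : B) (s : List (Fin (k + 1))) : B × List (Fin k) :=
  s.foldl (spliceStep next) (b, [])

theorem splice_append_cons (b : B) (s : List (Fin (k + 1))) (a : Fin (k + 1))
    (w : List (Fin (k + 1))) : splice next b (s ++ a :: w) =
      w.foldl (spliceStep next) (spliceStep next (splice next b s) a) := by
  rw [splice, List.foldl_append, List.foldl_cons, splice]

theorem foldl_spliceStep_of_forall_le_castSucc {w : List (Fin (k + 1))}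
    (hw : ∀ j ∈ w, j ≤ i.castSucc) (p : B × List (Fin k)) :
    ∃ v : List (Fin k), (∀ j ∈ v, j ≤ i) ∧ w.foldl (spliceStep next) p = (p.1, p.2 ++ v) := by
  induction w generalizing p with
  | nil => exact ⟨[], by simp, by simp⟩
  | cons a w ih =>
    obtain ⟨ha, htail⟩ := List.forall_mem_cons.1 hw
    obtain ⟨j, rfl⟩ : ∃ j : Fin k, j.castSucc = a :=
      ⟨a.castLT (ha.trans_lt i.castSucc_lt_last), Fin.castSucc_castLT _ _⟩
    obtain ⟨v, hv, hfold⟩ := ih htail (p.1, p.2 ++ [j])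
    refine ⟨j :: v, List.forall_mem_cons.2 ⟨Fin.castSucc_le_castSucc_iff.1 ha, hv⟩, ?_⟩
    rw [List.foldl_cons, spliceStep_castSucc, hfold, List.append_assoc, List.singleton_append]

theorem splice_of_bExt_castSucc (b : B) (h : BExt i.castSucc s t) :
    (splice next b t).1 = (splice next b s).1 ∧
      BExt i (splice next b s).2 (splice next b t).2 := by
  obtain ⟨w, hw, rfl⟩ := h
  obtain ⟨v, hv, hfold⟩ := foldl_spliceStep_of_forall_le_castSucc next hw
    (spliceStep next (splice next b s) i.castSucc)
  have heq : splice next b (s ++ i.castSucc :: w) =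
      ((splice next b s).1, (splice next b s).2 ++ i :: v) := by
    rw [splice_append_cons, hfold, spliceStep_castSucc, List.append_assoc, List.singleton_append]
  rw [heq]
  exact ⟨rfl, v, hv, rfl⟩

theorem exists_splice_eq_of_bSeq_castSucc (b : B) (hx : BSeq i.castSucc x) :
    ∃ c y, BSeq i y ∧ ∀ m, splice next b (x m) = (c, y m) := by
  have hstep m := splice_of_bExt_castSucc next b (hx m)
  refine ⟨(splice next b (x 0)).1, fun m => (splice next b (x m)).2, fun m => (hstep m).2,
    fun m => Prod.ext ?_ rfl⟩
  induction m with
  | zero => rfl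
  | succ m ih => exact (hstep m).1.trans ih

theorem next_le_splice_of_bExt_last [Preorder B] {next : B → List (Fin k) → B}
    (hnext : ∀ b s, b ≤ next b s) (b : B) (h : BExt (Fin.last k) s t) :
    next (splice next b s).1 (splice next b s).2 ≤ (splice next b t).1 := by
  have le_foldl (w : List (Fin (k + 1))) (p) : p.1 ≤ (w.foldl (spliceStep next) p).1 := by
    induction w generalizing p with
    | nil => exact le_rfl
    | cons a w ih =>
      refine le_trans ?_ (ih (spliceStep next p a))
      induction a using Fin.lastCases with
      | last => rw [spliceStep_last]; exact hnext p.1 p.2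
      | cast j => rw [spliceStep_castSucc]
  obtain ⟨w, -, rfl⟩ := h
  rw [splice_append_cons, spliceStep_last]
  exact le_foldl w (next (splice next b s).1 (splice next b s).2, [])

end Splicing

theorem nonempty_iInter_cylinder {E : ℕ → Type*} {z : ℕ → ∀ i, E i} {l : ℕ → ℕ}
    (hl : StrictMono l) (hz : Antitone fun m => PiNat.cylinder (z m) (l m)) :
    (⋂ m, PiNat.cylinder (z m) (l m)).Nonempty := by
  have hmem {m n : ℕ} (h : m ≤ n) : z n ∈ PiNat.cylinder (z m) (l m) :=
    hz h (PiNat.self_mem_cylinder _ _)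
  refine ⟨fun i => z (i + 1) i, mem_iInter.2 fun m i hi => ?_⟩
  rcases le_total (i + 1) m with h | h
  · exact (hmem h i (Nat.lt_of_succ_le (hl.id_le (i + 1)))).symm
  · exact hmem h i hi

section Fusion

variable {N : Type*} {E : Set (ℕ → ℕ)} {g : (ℕ → ℕ) → Set N} {a : N}

/-- The nodes of the splicing construction: a point of `E` with a length, standing for a cylinder
that meets `E`, and the finite set of values chosen so far. -/
structure Condition (E : Set (ℕ → ℕ)) (N : Type*) where
  point : ℕ → ℕ
  point_mem : point ∈ E
  length : ℕ
  used : Finset N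

namespace Condition

/-- The part of the Baire space to which a condition restricts. -/
def cylinder (b : Condition E N) : Set (ℕ → ℕ) :=
  PiNat.cylinder b.point b.length

/-- Stronger conditions are larger: they shrink the cylinder and have used more values. -/
instance : Preorder (Condition E N) :=
  Preorder.lift fun b => (OrderDual.toDual b.cylinder, b.length, b.used)

/-- The values that can still be chosen below `b`. -/
def available (g : (ℕ → ℕ) → Set N) (b : Condition E N) : Set N :=
  (⋃ z ∈ b.cylinder ∩ E, g z) \ b.used

/-- The value `a` has been used, and it belongs to `g z` for every `z` in the cylinder of `b`. -/
def Forces (g : (ℕ → ℕ) → Set N) (b : Condition E N) (a : N) : Prop :=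
  a ∈ b.used ∧ ∀ z ∈ b.cylinder, a ∈ g z

theorem Forces.mono {b c : Condition E N} (h : b.Forces g a) (hbc : b ≤ c) : c.Forces g a :=
  ⟨hbc.2.2 h.1, fun z hz => h.2 z (hbc.1 hz)⟩

theorem exists_forces (hg : ∀ a, IsOpen {z | a ∈ g z}) (b : Condition E N)
    (ha : a ∈ b.available g) : ∃ c, b ≤ c ∧ b.length < c.length ∧ c.Forces g a := by
  classical
  obtain ⟨hag, -⟩ := ha
  obtain ⟨z, ⟨hzb, hzE⟩, hz⟩ := mem_iUnion₂.1 hag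
  obtain ⟨_, ⟨y, m, rfl⟩, hzy, hy⟩ :=
    (PiNat.isTopologicalBasis_cylinders _).exists_subset_of_mem_open hz (hg a)
  rw [cylinder, PiNat.mem_cylinder_iff_eq] at hzb
  rw [PiNat.mem_cylinder_iff_eq] at hzy
  refine ⟨⟨z, hzE, max m (b.length + 1), insert a b.used⟩, ⟨?_, ?_, Finset.subset_insert _ _⟩,
    Nat.lt_of_succ_le (le_max_right _ _), Finset.mem_insert_self _ _, ?_⟩
  · exact (PiNat.cylinder_anti z (b.length.le_succ.trans (le_max_right _ _))).trans hzb.subset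
  · exact b.length.le_succ.trans (le_max_right _ _)
  · exact ((PiNat.cylinder_anti z (le_max_left _ _)).trans hzy.subset).trans hy

theorem injective_and_exists_range_subset {b : ℕ → Condition E N} {a : ℕ → N} (hb : Monotone b)
    (hlength : StrictMono fun m => (b m).length) (hnew : ∀ m, a m ∉ (b m).used)
    (hforces : ∀ m, (b (m + 1)).Forces g (a m)) :
    Function.Injective a ∧ ∃ z, range a ⊆ g z := by
  constructor
  · refine Function.Injective.of_lt_imp_ne fun m n hmn heq => hnew n ?_
    rw [← heq]
    exact ((hforces m).mono (hb hmn)).1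
  · obtain ⟨z, hz⟩ := nonempty_iInter_cylinder hlength fun m n hmn => (hb hmn).1
    refine ⟨z, ?_⟩
    rintro _ ⟨m, rfl⟩
    exact (hforces m).2 z (mem_iInter.1 hz (m + 1))

end Condition

theorem exists_isCritical_of_forall_critOn_available {k : ℕ} {Γ : Fin (k + 1) → Set (Set N)}
    (hg : ∀ a, IsOpen {z | a ∈ g z})
    (hgΓ : ∀ z, ∀ x ⊆ g z, x.Infinite → x ∈ Γ (Fin.last k)) (hE : E.Nonempty)
    (hcrit : ∀ b : Condition E N, CritOn (Fin.init Γ) (b.available g)) :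
    ∃ φ, (∀ s, φ s ∈ ⋃ z, g z) ∧ IsCritical Γ φ := by
  choose ψ hψ hψcrit using hcrit
  choose next hle hlength hforces using fun b s => Condition.exists_forces hg b (hψ b s)
  obtain ⟨z₀, hz₀⟩ := hE
  let state := splice next ⟨z₀, hz₀, 0, ∅⟩
  refine ⟨fun s => ψ (state s).1 (state s).2, fun s => ?_, fun i x hx => ?_⟩
  · exact iUnion₂_subset_iUnion _ _ (hψ (state s).1 (state s).2).1
  induction i using Fin.lastCases with
  | last =>
    have hstep m := next_le_splice_of_bExt_last hle ⟨z₀, hz₀, 0, ∅⟩ (hx m)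
    obtain ⟨hinj, z, hz⟩ := Condition.injective_and_exists_range_subset
      (b := fun m => (state (x m)).1) (a := (fun s => ψ (state s).1 (state s).2) ∘ x)
      (monotone_nat_of_le_succ fun m => (hle _ _).trans (hstep m))
      (strictMono_nat_of_lt_succ fun m => (hlength _ _).trans_le (hstep m).2.1)
      (fun m => (hψ _ _).2) fun m => (hforces _ _).mono (hstep m)
    have hinf := infinite_range_of_injective hinj
    exact ⟨hgΓ z _ hz hinf, hinf⟩
  | cast i =>
    obtain ⟨b, y, hy, hstate⟩ := exists_splice_eq_of_bSeq_castSucc next ⟨z₀, hz₀, 0, ∅⟩ hx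
    have heq : (fun s => ψ (state s).1 (state s).2) ∘ x = ψ b ∘ y :=
      funext fun m => by simp only [Function.comp_apply, state, hstate]
    rw [heq]
    exact hψcrit b i y hy

end Fusion

section Covering

variable {N : Type*} {P Q : Set N → Prop} {X Y : Set (Set N)} {A c : Set N}

/-- Every member of `X` is almost contained in a member of a countable family of sets satisfying
`P`. For fixed `P` these `X` form a `σ`-ideal. -/
def CountablyCovered (P : Set N → Prop) (X : Set (Set N)) : Prop :=
  ∃ C : Set (Set N), C.Countable ∧ (∀ c ∈ C, P c) ∧ ∀ x ∈ X, ∃ c ∈ C, AlmostSub x c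

theorem countablyCovered_of_forall_almostSub (hc : P c) (h : ∀ x ∈ X, AlmostSub x c) :
    CountablyCovered P X :=
  ⟨{c}, countable_singleton c, by simpa using hc, fun x hx => ⟨c, rfl, h x hx⟩⟩

theorem CountablyCovered.mono (hXY : X ⊆ Y) (h : CountablyCovered P Y) : CountablyCovered P X := by
  obtain ⟨C, hC, hP, hcov⟩ := h
  exact ⟨C, hC, hP, fun x hx => hcov x (hXY hx)⟩

theorem CountablyCovered.imp (hPQ : ∀ c, P c → Q c) (h : CountablyCovered P X) :
    CountablyCovered Q X := by
  obtain ⟨C, hC, hP, hcov⟩ := h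
  exact ⟨C, hC, fun c hc => hPQ c (hP c hc), hcov⟩

theorem countablyCovered_sUnion {T : Set (Set (Set N))} (hT : T.Countable)
    (h : ∀ X ∈ T, CountablyCovered P X) : CountablyCovered P (⋃₀ T) := by
  choose! C hC hP hcov using h
  refine ⟨⋃ X ∈ T, C X, hT.biUnion hC, fun c hc => ?_, fun x ⟨X, hX, hx⟩ => ?_⟩
  · obtain ⟨X, hX, hc⟩ := mem_iUnion₂.1 hc
    exact hP X hX c hc
  · obtain ⟨c, hc, hxc⟩ := hcov X hX x hx
    exact ⟨c, mem_iUnion₂.2 ⟨X, hX, hc⟩, hxc⟩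

theorem countablyCovered_forall {κ : Type*} [Finite κ] {P : κ → Set N → Prop}
    (hP : ∀ τ, Antitone (P τ)) (h : ∀ τ, CountablyCovered (P τ) X) :
    CountablyCovered (fun c => ∀ τ, P τ c) X := by
  choose C hC hPC hcov using h
  refine ⟨(fun d : κ → Set N => ⋂ τ, d τ) '' univ.pi C, (countable_univ_pi hC).image _, ?_,
    fun x hx => ?_⟩
  · rintro _ ⟨d, hd, rfl⟩ τ
    exact hP τ (iInter_subset d τ) (hPC τ _ (hd τ trivial))
  · choose d hd hxd using fun τ => hcov τ x hx
    refine ⟨_, ⟨d, fun τ _ => hd τ, rfl⟩, ?_⟩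
    rw [AlmostSub, sdiff_iInter]
    exact finite_iUnion hxd

end Covering

section Dichotomy

theorem exists_nonempty_forall_nhds_not {Z : Type*} [TopologicalSpace Z]
    [HereditarilyLindelofSpace Z] {p : Set Z → Prop} (hmono : ∀ ⦃s t⦄, s ⊆ t → p t → p s)
    (hunion : ∀ S : Set (Set Z), S.Countable → (∀ s ∈ S, p s) → p (⋃₀ S)) {D : Set Z}
    (hD : ¬ p D) : ∃ E ⊆ D, E.Nonempty ∧ ∀ z ∈ E, ∀ V ∈ 𝓝 z, ¬ p (V ∩ E) := by
  let E := {z ∈ D | ∀ V ∈ 𝓝 z, ¬ p (V ∩ D)}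
  have hsmall : p (D \ E) := by
    refine (HereditarilyLindelofSpace.isLindelof (D \ E)).induction_on hmono hunion fun z hz => ?_
    have hzE : ¬ ∀ V ∈ 𝓝 z, ¬ p (V ∩ D) := fun h => hz.2 ⟨hz.1, h⟩
    push Not at hzE
    obtain ⟨V, hV, hp⟩ := hzE
    exact ⟨(D \ E) ∩ V, inter_mem_nhdsWithin _ hV,
      hmono (show (D \ E) ∩ V ⊆ V ∩ D from fun y hy => ⟨hy.2, hy.1.1⟩) hp⟩
  refine ⟨E, sep_subset _ _, ?_, fun z hz V hV hp => hz.2 V hV ?_⟩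
  · rw [nonempty_iff_ne_empty]
    intro hE
    exact hD (by rwa [hE, sdiff_empty] at hsmall)
  · refine hmono ?_ (hunion {V ∩ E, D \ E} (to_countable _) ?_)
    · rw [sUnion_pair]
      rintro y ⟨hyV, hyD⟩
      by_cases hyE : y ∈ E
      · exact Or.inl ⟨hyV, hyE⟩
      · exact Or.inr ⟨hyD, hyE⟩
    · rintro _ (rfl | rfl)
      exacts [hp, hsmall]

variable {N : Type*}

theorem AnalyticFam.eq_empty_or_exists_range_eq {X : Set (Set N)} (h : AnalyticFam X) :
    X = ∅ ∨ ∃ g : (ℕ → ℕ) → Set N, range g = X ∧ ∀ a, IsOpen {z | a ∈ g z} := by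
  classical
  let F (f : N → Bool) : Set N := {a | f a = true}
  have hF : Function.Surjective F := fun x => ⟨fun a => decide (a ∈ x), by simp [F]⟩
  rw [AnalyticFam, MeasureTheory.AnalyticSet] at h
  rcases h with hempty | ⟨f, hf, hrange⟩
  · exact Or.inl (hF.preimage_injective hempty)
  · refine Or.inr ⟨F ∘ f, ?_, fun a => ?_⟩
    · rw [range_comp, hrange]
      exact image_preimage_eq X hF
    · exact (isOpen_discrete {true}).preimage ((continuous_apply a).comp hf)

variable {k : ℕ}

theorem critOn_available_of_not_countablyCovered {Γ : Fin k → Set (Set N)}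
    {g : (ℕ → ℕ) → Set N} {E : Set (ℕ → ℕ)} {b : Condition E N}
    (h : ¬ CountablyCovered (¬ CritOn Γ ·) (g '' (b.cylinder ∩ E))) :
    CritOn Γ (b.available g) := by
  by_contra hcrit
  refine h (countablyCovered_of_forall_almostSub hcrit ?_)
  rintro _ ⟨z, hz, rfl⟩
  refine b.used.finite_toSet.subset fun a ⟨ha, hab⟩ => ?_
  by_contra hused
  exact hab ⟨mem_iUnion₂.2 ⟨z, hz, ha⟩, hused⟩

theorem countablyCovered_of_not_critOn {Γ : Fin (k + 1) → Set (Set N)} {A : Set N}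
    (hher : HerFam (Γ (Fin.last k)))
    (hana : AnalyticFam (Γ (Fin.last k))) (hA : ¬ CritOn Γ A) :
    CountablyCovered (¬ CritOn (Fin.init Γ) ·) ((· ∩ A) '' Γ (Fin.last k)) := by
  rcases hana.eq_empty_or_exists_range_eq with hempty | ⟨g, hrange, hg⟩
  · exact ⟨∅, countable_empty, by simp, by simp [hempty]⟩
  rw [← hrange, ← range_comp, ← image_univ]
  by_contra hcov
  obtain ⟨E, -, hE, hlarge⟩ := exists_nonempty_forall_nhds_not
    (p := fun U => CountablyCovered (¬ CritOn (Fin.init Γ) ·) (((· ∩ A) ∘ g) '' U))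
    (fun U V hUV h => h.mono (image_mono hUV))
    (fun S hS h => by
      rw [image_sUnion]
      exact countablyCovered_sUnion (hS.image _) (forall_mem_image.2 h)) hcov
  obtain ⟨φ, hφA, hφ⟩ := exists_isCritical_of_forall_critOn_available (g := (· ∩ A) ∘ g)
    (fun a => (hg a).and isOpen_const)
    (fun z x hx => hher (g z) (hrange ▸ mem_range_self z) x (hx.trans inter_subset_left)) hE
    fun b => critOn_available_of_not_countablyCovered (hlarge b.point b.point_mem b.cylinder
      ((PiNat.isOpen_cylinder _ _ _).mem_nhds (PiNat.self_mem_cylinder _ _)))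
  exact hA ⟨φ, fun s => iUnion_subset (fun z => inter_subset_right) (hφA s), hφ⟩

end Dichotomy

section Separation

variable {N ι : Type*} {Γ : ι → Set (Set N)} {A : Set N}

/-- The families `Γ`, restricted to `A`, are separated by sets with no common point in `A`. -/
def SepOn (Γ : ι → Set (Set N)) (A : Set N) : Prop :=
  ∃ a : ι → Set N, (∀ i, ∀ x ∈ Γ i, AlmostSub (x ∩ A) (a i)) ∧ ∀ p ∈ A, ∃ i, p ∉ a i

theorem SepOn.sepFam (h : SepOn Γ univ) : SepFam Γ := by
  obtain ⟨a, ha, hempty⟩ := h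
  refine ⟨a, fun i x hx => by simpa only [AlmostSub, inter_univ] using ha i x hx, ?_⟩
  have hinter : ⋂ i, a i = ∅ := by
    refine eq_empty_of_forall_notMem fun p hp => ?_
    obtain ⟨i, hi⟩ := hempty p trivial
    exact hi (mem_iInter.1 hp i)
  rw [hinter]
  exact finite_empty

theorem sepOn_empty (Γ : ι → Set (Set N)) : SepOn Γ ∅ :=
  ⟨fun _ => ∅, fun i x _ => by simp [AlmostSub], by simp⟩

theorem sepOn_of_seq {j : ℕ → ι} {c : ℕ → Set N}
    (hsep : ∀ m, SepOn (fun i : {i // i ≠ j m} => Γ i) (c m))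
    (hcov : ∀ i, ∀ x ∈ Γ i, ∃ m, j m = i ∧ AlmostSub (x ∩ A) (c m)) : SepOn Γ A := by
  choose a ha hempty using hsep
  -- On the part of `c m` that is new at stage `m`, the separation there needs no condition on the
  -- family `j m`.
  let b (i : ι) : Set N := {p | ∃ m, p ∈ disjointed c m ∧ ∀ h : i ≠ j m, p ∈ a m ⟨i, h⟩}
  refine ⟨b, fun i x hx => ?_, fun p _ => ?_⟩
  · obtain ⟨m, -, hm⟩ := hcov i x hx
    have hfin : (⋃ l ∈ Finset.Iic m, ⋃ h : i ≠ j l, (x ∩ c l) \ a l ⟨i, h⟩).Finite :=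
      (Finset.finite_toSet _).biUnion fun l _ => finite_iUnion fun h => ha l ⟨i, h⟩ x hx
    refine (hm.union hfin).subset fun p ⟨hp, hpb⟩ => ?_
    by_cases hpc : p ∈ c m
    · have hpd : p ∈ ⋃ l ∈ Finset.Iic m, disjointed c l := by
        rw [biUnion_Iic_disjointed]
        exact le_partialSups c m hpc
      obtain ⟨l, hl, hpl⟩ := mem_iUnion₂.1 hpd
      obtain ⟨h, hpa⟩ : ∃ h : i ≠ j l, p ∉ a l ⟨i, h⟩ := by
        by_contra! h
        exact hpb ⟨l, hpl, h⟩
      exact Or.inr (mem_iUnion₂.2 ⟨l, hl, mem_iUnion.2 ⟨h, ⟨hp.1, disjointed_subset c l hpl⟩, hpa⟩⟩)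
    · exact Or.inl ⟨hp, hpc⟩
  · by_contra! hp
    obtain ⟨m, hpm, -⟩ := hp (j 0)
    obtain ⟨⟨i, hi⟩, hpa⟩ := hempty m p (disjointed_subset c m hpm)
    obtain ⟨l, hpl, hl⟩ := hp i
    obtain rfl : l = m := (disjoint_disjointed c).eq (not_disjoint_iff.2 ⟨p, hpl, hpm⟩)
    exact hpa (hl hi)

theorem sepOn_of_countablyCovered [Countable ι] [Nonempty ι]
    (h : ∀ j, CountablyCovered (SepOn fun i : {i // i ≠ j} => Γ i) ((· ∩ A) '' Γ j)) :
    SepOn Γ A := by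
  choose C hC hsep hcov using h
  obtain ⟨j₀⟩ := ‹Nonempty ι›
  let T : Set (ι × Set N) := insert (j₀, ∅) (⋃ j, Prod.mk j '' C j)
  have hT : T.Countable := (countable_iUnion fun j => (hC j).image _).insert _
  obtain ⟨q, hq⟩ := hT.exists_eq_range (insert_nonempty _ _)
  refine sepOn_of_seq (j := fun m => (q m).1) (c := fun m => (q m).2) (fun m => ?_) fun i x hx => ?_
  · have hm : q m ∈ T := hq ▸ mem_range_self m
    rcases hm with hm | hm
    · rw [hm]
      exact sepOn_empty _
    · obtain ⟨j, c, hc, hjc⟩ := mem_iUnion.1 hm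
      rw [← hjc]
      exact hsep j c hc
  · obtain ⟨c, hc, hxc⟩ := hcov i (x ∩ A) (mem_image_of_mem _ hx)
    obtain ⟨m, hm⟩ : (i, c) ∈ range q :=
      hq ▸ mem_insert_of_mem _ (mem_iUnion.2 ⟨i, mem_image_of_mem _ hc⟩)
    exact ⟨m, congrArg Prod.fst hm, by rwa [hm]⟩

theorem sepOn_of_forall_not_critOn [Finite ι] {n : ℕ} (hn : Nat.card ι = n)
    (hher : ∀ i, HerFam (Γ i)) (hana : ∀ i, AnalyticFam (Γ i))
    (hA : ∀ σ : Fin n ≃ ι, ¬ CritOn (Γ ∘ σ) A) : SepOn Γ A := by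
  classical
  induction n generalizing ι A with
  | zero =>
    have : IsEmpty ι := Finite.card_eq_zero_iff.1 hn
    refine ⟨isEmptyElim, isEmptyElim, fun p hp => ?_⟩
    exact (hA (Equiv.equivOfIsEmpty _ _) ⟨fun _ => p, fun _ => hp, finZeroElim⟩).elim
  | succ n ih =>
    have : Nonempty ι := (Nat.card_pos_iff.1 (by omega)).1
    refine sepOn_of_countablyCovered fun j => ?_
    have hcard : Nat.card {i // i ≠ j} = n := by
      rw [← Nat.card_congr (Equiv.optionSubtypeNe j), Finite.card_option] at hn
      omega
    have hcover (τ : Fin n ≃ {i // i ≠ j}) :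
        CountablyCovered (¬ CritOn ((fun i : {i // i ≠ j} => Γ i) ∘ τ) ·) ((· ∩ A) '' Γ j) := by
      let σ : Fin (n + 1) ≃ ι :=
        (finSuccEquivLast.trans τ.optionCongr).trans (Equiv.optionSubtypeNe j)
      have hinit : Fin.init (Γ ∘ σ) = (fun i : {i // i ≠ j} => Γ i) ∘ τ := by
        funext i
        simp [Fin.init, σ]
      have hlast : σ (Fin.last n) = j := by simp [σ]
      have hcov := countablyCovered_of_not_critOn (hher _) (hana _) (hA σ)
      rwa [hinit, Function.comp_apply, hlast] at hcov
    have hanti (τ : Fin n ≃ {i // i ≠ j}) :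
        Antitone (¬ CritOn ((fun i : {i // i ≠ j} => Γ i) ∘ τ) ·) :=
      fun c d hcd hd hc => hd (hc.mono hcd)
    exact (countablyCovered_forall hanti hcover).imp fun c hc =>
      ih hcard (fun i => hher i) (fun i => hana i) hc

end Separation

theorem statement_6_general {n : ℕ} {N : Type*} {Γ : Fin n → Set (Set N)} (hsep : ¬ SepFam Γ)
    (hher : ∀ i, HerFam (Γ i)) (hana : ∀ i, AnalyticFam (Γ i)) :
    ∃ (φ : List (Fin n) → N) (ε : Equiv.Perm (Fin n)), Function.Injective φ ∧
      ∀ i : Fin n, ∀ X : Set (List (Fin n)), BChain i X → φ '' X ∈ Γ (ε i) := by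
  obtain ⟨ε, φ, -, hφ⟩ : ∃ ε : Equiv.Perm (Fin n), CritOn (Γ ∘ ε) univ := by
    by_contra! hcrit
    exact hsep (sepOn_of_forall_not_critOn (Nat.card_fin n) hher hana hcrit).sepFam
  obtain ⟨ψ, hinj, hψ⟩ := hφ.exists_injective
  exact ⟨ψ, ε, hinj, fun i X hX => hψ.image_mem hX⟩

/-- every analytic n∗-gap contains a copy of the critical n-gap, up to a
permutation: there are an injection φ of the n-adic tree into N and a permutation ε of
{0,…,n−1} sending every [i]-chain into Γ_{ε(i)}. -/
theorem statement_6 (n : ℕ) (N : Type) [Countable N] [Infinite N] (Γ : Fin n → Set (Set N))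
    (hgap : NStarGap Γ) (hana : ∀ i, AnalyticFam (Γ i)) :
    ∃ (φ : List (Fin n) → N) (ε : Equiv.Perm (Fin n)), Function.Injective φ ∧
      ∀ i : Fin n, ∀ X : Set (List (Fin n)), BChain i X → φ '' X ∈ Γ (ε i) :=
  statement_6_general hgap.2.1 hgap.2.2 hana
end

section
/- Let Γ = {Γ₀, Γ₁} be a 2-gap on a countable set N such that Γ₁ is analytic and Γ₁ is not countably generated in Γ₀^⊥. Then there exists an injective function u : 2^{<ω} → N such that for each i ∈ {0,1} and every [i]-chain X ⊆ 2^{<ω}, the image u(X) = {u(s) : s ∈ X} belongs to Γ_i. -/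
open Set

/-- A family `I` is countably generated in a family `J` if some countable `D ⊆ J`
has the property that every member of `I` is contained in some member of `D`. -/
def CtblGenIn {N : Type*} (I J : Set (Set N)) : Prop :=
  ∃ D ⊆ J, D.Countable ∧ ∀ x ∈ I, ∃ y ∈ D, x ⊆ y

/-!
Parametrize `Γ₁` by a continuous `f : X → 2^N` on a Polish space `X`. The sets `A ⊆ X` whose image
is countably generated in `Γ₀^⊥` form a σ-ideal; let `K` be the set of points none of whose
neighbourhoods is in it. Since `X` is hereditarily Lindelöf, `Kᶜ` is in the ideal, so for an open
`U` outside the ideal the union of `f(U ∩ K)` is not in `Γ₀^⊥` and hence contains an infinite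
member of `Γ₀`. Attach to each node `s` of the dyadic tree a basic open set `U_s` outside the
ideal, and choose `u(s)` in the infinite member of `Γ₀` belonging to `U_s`. Take `U_{s⌢0} = U_s`,
so that the image of a `[0]`-chain lies in a single member of `Γ₀`. Take `U_{s⌢1}` to be a small
set with closure in `U_s` on which `u(s) ∈ f(x)`, so that the sets along a `[1]`-chain shrink to a
point `y` and the image of the chain lies in `f(y) ∈ Γ₁`.
-/

open TopologicalSpace Metric Filter Topology

theorem exists_injective_forall_mem_of_infinite {J N : Type*} [Countable J] {C : J → Set N}
    (hC : ∀ j, (C j).Infinite) : ∃ g : J → N, Function.Injective g ∧ ∀ j, g j ∈ C j := by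
  classical
  -- Finite subsets whose sizes grow along an enumeration of `J` satisfy Hall's condition.
  obtain ⟨e, he⟩ := exists_injective_nat J
  choose T hTC hTcard using fun j => (hC j).exists_subset_card_eq (e j + 1)
  obtain ⟨g, hg, hgT⟩ := (Finset.all_card_le_biUnion_card_iff_exists_injective T).1 fun s => by
    obtain rfl | hs := s.eq_empty_or_nonempty
    · simp
    obtain ⟨j, hj, hmax⟩ := s.exists_max_image e hs
    calc s.card = (s.image e).card := (Finset.card_image_of_injective s he).symm
      _ ≤ (Finset.range (e j + 1)).card := Finset.card_le_card fun _ hk => by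
        obtain ⟨i, hi, rfl⟩ := Finset.mem_image.1 hk
        exact Finset.mem_range_succ_iff.2 (hmax i hi)
      _ = (T j).card := by rw [Finset.card_range, hTcard]
      _ ≤ (s.biUnion T).card := Finset.card_le_card (Finset.subset_biUnion_of_mem T hj)
  exact ⟨g, hg, fun j => hTC j (hgT j)⟩

theorem exists_mem_forall_of_antitone_of_subset_closedBall {X : Type*} [PseudoMetricSpace X]
    [CompleteSpace X] {F : ℕ → Set X} (hF : Antitone F) (hclosed : ∀ k, IsClosed (F k))
    (hne : ∀ k, (F k).Nonempty) {r : ℕ → ℝ} (hr : Tendsto r atTop (𝓝 0))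
    (hball : ∀ k, ∃ x, F k ⊆ closedBall x (r k)) : ∃ y, ∀ k, y ∈ F k := by
  choose x hx using hball
  have hr0 (k) : 0 ≤ r k := nonempty_closedBall.1 ((hne k).mono (hx k))
  have hdiam : Tendsto (fun k => diam (F k)) atTop (𝓝 0) :=
    squeeze_zero (fun _ => diam_nonneg) (fun k => diam_le_of_subset_closedBall (hr0 k) (hx k))
      (by simpa using hr.const_mul 2)
  have hinter (n) : (⋂ k ≤ n, F k).Nonempty := (hne n).mono (subset_iInter₂ fun _ hk => hF hk)
  obtain ⟨y, hy⟩ := nonempty_iInter_of_nonempty_biInter hclosed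
    (fun k => isBounded_closedBall.subset (hx k)) hinter hdiam
  exact ⟨y, mem_iInter.1 hy⟩

namespace HerFam

variable {N : Type*} {I : Set (Set N)}

theorem exists_infinite_subset_of_notMem_orthFamC (hI : HerFam I) {y : Set N}
    (hy : y ∉ orthFamC I) : ∃ c ∈ I, c.Infinite ∧ c ⊆ y := by
  obtain ⟨x, hx, hinf⟩ : ∃ x ∈ I, (x ∩ y).Infinite := by
    by_contra! h
    exact hy h
  exact ⟨x ∩ y, hI x hx _ inter_subset_left hinf, hinf, inter_subset_right⟩

end HerFam

namespace CtblGenIn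

variable {N : Type*} {I I' J : Set (Set N)}

theorem mono (h : CtblGenIn I J) (hI : I' ⊆ I) : CtblGenIn I' J := by
  obtain ⟨D, hDJ, hDc, hD⟩ := h
  exact ⟨D, hDJ, hDc, fun x hx => hD x (hI hx)⟩

theorem sUnion {K : Set (Set (Set N))} (hK : K.Countable) (h : ∀ I ∈ K, CtblGenIn I J) :
    CtblGenIn (⋃₀ K) J := by
  choose! D hDJ hDc hD using h
  refine ⟨⋃ I ∈ K, D I, iUnion₂_subset hDJ, hK.biUnion hDc, fun x ⟨I, hI, hx⟩ => ?_⟩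
  obtain ⟨y, hy, hxy⟩ := hD I hI x hx
  exact ⟨y, mem_biUnion hI hy, hxy⟩

theorem union (h : CtblGenIn I J) (h' : CtblGenIn I' J) : CtblGenIn (I ∪ I') J := by
  rw [← sUnion_pair]
  exact sUnion (to_countable _) (by rintro _ (rfl | rfl) <;> assumption)

theorem of_sUnion_mem (h : ⋃₀ I ∈ J) : CtblGenIn I J :=
  ⟨{⋃₀ I}, singleton_subset_iff.2 h, countable_singleton _,
    fun _ hx => ⟨_, rfl, subset_sUnion_of_mem hx⟩⟩

end CtblGenIn

/-- The kernel of a family `f` of subsets of `N` parametrized by a space `X`, with respect to `J`: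
the points of `X` all of whose neighbourhoods have an image that is not countably generated in
`J`. -/
def ctblGenKernel {X N : Type*} [TopologicalSpace X] (f : X → Set N) (J : Set (Set N)) : Set X :=
  {x | ∀ U ∈ 𝓝 x, ¬ CtblGenIn (f '' U) J}

section Kernel

variable {X N : Type*} [TopologicalSpace X] {f : X → Set N} {J : Set (Set N)}

variable (f J) in
theorem ctblGenIn_image_compl_ctblGenKernel [HereditarilyLindelofSpace X] :
    CtblGenIn (f '' (ctblGenKernel f J)ᶜ) J := by
  refine (HereditarilyLindelofSpace.isLindelof (ctblGenKernel f J)ᶜ).induction_on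
    (p := fun A => CtblGenIn (f '' A) J) (fun _ _ hAB h => h.mono (image_mono hAB)) ?_ ?_
  · intro S hS h
    rw [sUnion_eq_biUnion, image_iUnion₂, ← sUnion_image]
    exact .sUnion (hS.image _) (forall_mem_image.2 h)
  · intro x hx
    simp only [ctblGenKernel, mem_compl_iff, mem_ofPred_eq, not_forall, not_not] at hx
    obtain ⟨U, hU, h⟩ := hx
    exact ⟨U, mem_nhdsWithin_of_mem_nhds hU, h⟩

theorem inter_ctblGenKernel_nonempty [HereditarilyLindelofSpace X] {A : Set X}
    (hA : ¬ CtblGenIn (f '' A) J) : (A ∩ ctblGenKernel f J).Nonempty := by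
  contrapose! hA
  exact (ctblGenIn_image_compl_ctblGenKernel f J).mono (image_mono
    (subset_compl_iff_disjoint_right.2 (disjoint_iff_inter_eq_empty.2 hA)))

theorem sUnion_image_inter_ctblGenKernel_notMem [HereditarilyLindelofSpace X] {A : Set X}
    (hA : ¬ CtblGenIn (f '' A) J) : ⋃₀ (f '' (A ∩ ctblGenKernel f J)) ∉ J := fun hJ => by
  have hK := (CtblGenIn.of_sUnion_mem hJ).union (ctblGenIn_image_compl_ctblGenKernel f J)
  rw [← image_union] at hK
  have hAK : A ⊆ A ∩ ctblGenKernel f J ∪ (ctblGenKernel f J)ᶜ := fun x hx =>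
    (em (x ∈ ctblGenKernel f J)).imp_left (⟨hx, ·⟩)
  exact hA (hK.mono (image_mono hAK))

theorem exists_mem_countableBasis_closure_subset_of_mem_ctblGenKernel
    [SecondCountableTopology X] [RegularSpace X] {x : X} (hx : x ∈ ctblGenKernel f J) {W : Set X}
    (hW : W ∈ 𝓝 x) :
    ∃ V ∈ countableBasis X, closure V ⊆ W ∧ ¬ CtblGenIn (f '' V) J := by
  obtain ⟨V, hV, hxV, hVW⟩ := (isBasis_countableBasis X).exists_closure_subset hW
  exact ⟨V, hV, hVW, hx V ((isBasis_countableBasis X).mem_nhds hV hxV)⟩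

end Kernel

theorem rel_append_of_forall_rel_concat {α S : Type*} {t : List α → S} {r : S → S → Prop}
    [IsPreorder S r] {p : α → Prop} (h : ∀ s a, p a → r (t s) (t (s ++ [a]))) (s : List α)
    {w : List α} (hw : ∀ a ∈ w, p a) : r (t s) (t (s ++ w)) := by
  induction w generalizing s with
  | nil => simpa using refl_of r (t s)
  | cons a w ih =>
    rw [List.append_cons]
    obtain ⟨ha, hw⟩ := List.forall_mem_cons.1 hw
    exact trans_of r (h s a ha) (ih (s ++ [a]) hw)

theorem exists_injective_dyadic_labelling {S N : Type*} [Countable S] [Nonempty S]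
    {C : S → Set N} (hC : ∀ σ, (C σ).Infinite) {R : List (Fin 2) → S → N → S → Prop}
    (hR : ∀ s σ, ∀ m ∈ C σ, ∃ τ, R s σ m τ) :
    ∃ (u : List (Fin 2) → N) (t : List (Fin 2) → S), Function.Injective u ∧
      (∀ s, u s ∈ C (t s)) ∧ (∀ s, t (s ++ [0]) = t s) ∧
      ∀ s, R s (t s) (u s) (t (s ++ [1])) := by
  -- Choosing labels injectively for all pairs of a state and a node beforehand frees the recursion
  -- along the tree from avoiding earlier labels.
  obtain ⟨g, hg, hgC⟩ := exists_injective_forall_mem_of_infinite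
    (C := fun p : S × List (Fin 2) => C p.1) (fun p => hC p.1)
  choose next hnext using fun s σ => hR s σ (g (σ, s)) (hgC (σ, s))
  let t (s : List (Fin 2)) : S :=
    s.reverseRecOn (Classical.arbitrary S) fun s i σ => if i = 0 then σ else next s σ
  have ht_concat (s i) : t (s ++ [i]) = if i = 0 then t s else next s (t s) :=
    List.reverseRecOn_concat ..
  refine ⟨fun s => g (t s, s), t, fun a b hab => (Prod.ext_iff.1 (hg hab)).2,
    fun s => hgC (t s, s), fun s => by simp [ht_concat], fun s => ?_⟩
  simpa [ht_concat] using hnext s (t s)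

namespace BChain

theorem strictMono_length {n : ℕ} {i : Fin n} {x : ℕ → List (Fin n)}
    (hx : ∀ k, ∃ w : List (Fin n), (∀ j ∈ w, j ≤ i) ∧ x (k + 1) = x k ++ i :: w) :
    StrictMono fun k => (x k).length :=
  strictMono_nat_of_lt_succ fun k => by
    obtain ⟨w, -, hw⟩ := hx k
    simp only [hw, List.length_append, List.length_cons]
    omega

variable {n : ℕ} {i : Fin n} {X : Set (List (Fin n))}

theorem infinite (hX : BChain i X) : X.Infinite := by
  obtain ⟨x, rfl, hx⟩ := hX
  exact infinite_range_of_injective (strictMono_length hx).injective.of_comp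

theorem exists_forall_eq_of_concat_zero [NeZero n] {S : Type*} {t : List (Fin n) → S}
    (ht : ∀ s, t (s ++ [0]) = t s) (hX : BChain 0 X) : ∃ σ, ∀ s ∈ X, t s = σ := by
  obtain ⟨x, rfl, hx⟩ := hX
  have hstep (k) : t (x k) = t (x (k + 1)) := by
    obtain ⟨w, hw, hxk⟩ := hx k
    rw [hxk]
    refine rel_append_of_forall_rel_concat (r := Eq) (p := (· = 0)) ?_ (x k) ?_
    · rintro s _ rfl
      exact (ht s).symm
    · exact List.forall_mem_cons.2 ⟨rfl, fun j hj => nonpos_iff_eq_zero.1 (hw j hj)⟩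
  refine ⟨t (x 0), forall_mem_range.2 fun k => ?_⟩
  induction k with
  | zero => rfl
  | succ k ih => rw [← hstep k, ih]

theorem exists_forall_mem_closure {Y : Type*} [PseudoMetricSpace Y] [CompleteSpace Y]
    {A : List (Fin n) → Set Y} (hne : ∀ s, (A s).Nonempty) (hanti : ∀ s j, A (s ++ [j]) ⊆ A s)
    (hcl : ∀ s, closure (A (s ++ [i])) ⊆ A s)
    (hball : ∀ s, ∃ y, closure (A (s ++ [i])) ⊆ closedBall y (1 / (s.length + 1)))
    (hX : BChain i X) : ∃ y, ∀ s ∈ X, y ∈ closure (A (s ++ [i])) := by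
  obtain ⟨x, rfl, hx⟩ := hX
  have hstep (k) : A (x (k + 1)) ⊆ A (x k ++ [i]) := by
    obtain ⟨w, -, hxk⟩ := hx k
    rw [hxk, List.append_cons]
    exact rel_append_of_forall_rel_concat (r := fun B B' : Set Y => B ⊇ B') (p := fun _ => True)
      (fun s j _ => hanti s j) _ fun _ _ => trivial
  have hlen : Tendsto (fun k => 1 / ((x k).length + 1 : ℝ)) atTop (𝓝 0) :=
    tendsto_one_div_add_atTop_nhds_zero_nat.comp (strictMono_length hx).tendsto_atTop
  obtain ⟨y, hy⟩ := exists_mem_forall_of_antitone_of_subset_closedBall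
    (F := fun k => closure (A (x k ++ [i])))
    (antitone_nat_of_succ_le fun k => (hcl _).trans ((hstep k).trans subset_closure))
    (fun _ => isClosed_closure) (fun _ => (hne _).closure) hlen (fun k => hball (x k))
  exact ⟨y, forall_mem_range.2 hy⟩

end BChain

theorem exists_dyadic_embedding_of_isOpen {Y N : Type*} [PseudoMetricSpace Y] [CompleteSpace Y]
    [SecondCountableTopology Y] {Γ₀ Γ₁ : Set (Set N)} (hher₀ : HerFam Γ₀) (hher₁ : HerFam Γ₁)
    {f : Y → Set N} (hf : ∀ m, IsOpen {x | m ∈ f x}) (hfΓ : ∀ x, f x ∈ Γ₁)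
    (hncg : ¬ CtblGenIn (range f) (orthFamC Γ₀)) :
    ∃ u : List (Fin 2) → N, Function.Injective u ∧
      ∀ i : Fin 2, ∀ X : Set (List (Fin 2)), BChain i X → u '' X ∈ ![Γ₀, Γ₁] i := by
  let S := {U : Set Y // U ∈ countableBasis Y ∧ ¬ CtblGenIn (f '' U) (orthFamC Γ₀)}
  have : Countable S := ((countable_countableBasis Y).mono fun _ hU => hU.1).to_subtype
  have : Nonempty S := by
    rw [← image_univ] at hncg
    obtain ⟨x, -, hx⟩ := inter_ctblGenKernel_nonempty hncg
    obtain ⟨V, hV, -, hVncg⟩ :=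
      exists_mem_countableBasis_closure_subset_of_mem_ctblGenKernel hx univ_mem
    exact ⟨V, hV, hVncg⟩
  choose C hCΓ hCinf hCsub using fun U : S => hher₀.exists_infinite_subset_of_notMem_orthFamC
    (sUnion_image_inter_ctblGenKernel_notMem U.2.2)
  have hshrink (s : List (Fin 2)) (U : S) (m : N) (hm : m ∈ C U) : ∃ V : S,
      closure V.1 ⊆ U ∧ (∀ y ∈ closure V.1, m ∈ f y) ∧
        ∃ x, closure V.1 ⊆ closedBall x (1 / (s.length + 1)) := by
    obtain ⟨_, ⟨x, ⟨hxU, hx⟩, rfl⟩, hmx⟩ := hCsub U hm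
    obtain ⟨V, hV, hVW, hVncg⟩ := exists_mem_countableBasis_closure_subset_of_mem_ctblGenKernel hx
      (inter_mem (inter_mem ((isBasis_countableBasis Y).mem_nhds U.2.1 hxU)
        ((hf m).mem_nhds hmx)) (closedBall_mem_nhds x (Nat.one_div_pos_of_nat (n := s.length))))
    exact ⟨⟨V, hV, hVncg⟩, fun y hy => (hVW hy).1.1, fun y hy => (hVW hy).1.2, x,
      fun y hy => (hVW hy).2⟩
  obtain ⟨u, t, hu, huC, ht0, ht1⟩ := exists_injective_dyadic_labelling hCinf hshrink
  refine ⟨u, hu, Fin.forall_fin_two.2 ⟨fun X hX => ?_, fun X hX => ?_⟩⟩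
  · obtain ⟨σ, hσ⟩ := hX.exists_forall_eq_of_concat_zero ht0
    exact hher₀ (C σ) (hCΓ σ) _ (image_subset_iff.2 fun s hs => hσ s hs ▸ huC s)
      (hX.infinite.image hu.injOn)
  · have hanti : ∀ s j, (t (s ++ [j])).1 ⊆ t s := fun s => Fin.forall_fin_two.2
      ⟨(congrArg Subtype.val (ht0 s)).subset, subset_closure.trans (ht1 s).1⟩
    obtain ⟨y, hy⟩ := hX.exists_forall_mem_closure (A := fun s => (t s).1)
      (fun s => (inter_ctblGenKernel_nonempty (t s).2.2).left) hanti (fun s => (ht1 s).1)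
      (fun s => (ht1 s).2.2)
    exact hher₁ (f y) (hfΓ y) _ (image_subset_iff.2 fun s hs => (ht1 s).2.1 y (hy s hs))
      (hX.infinite.image hu.injOn)

theorem AnalyticFam.exists_polishSpace_range_eq {N : Type*} {Γ : Set (Set N)}
    (hΓ : AnalyticFam Γ) :
    ∃ (X : Type) (_ : TopologicalSpace X) (_ : PolishSpace X) (f : X → Set N),
      (∀ m, IsOpen {x | m ∈ f x}) ∧ range f = Γ := by
  obtain ⟨X, _, _, g, hg, hrange⟩ :=
    MeasureTheory.analyticSet_iff_exists_polishSpace_range.1 hΓ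
  let toSet (b : N → Bool) : Set N := {m | b m = true}
  have htoSet : Function.Surjective toSet := fun a => by
    classical exact ⟨fun m => decide (m ∈ a), by simp [toSet]⟩
  refine ⟨X, _, ‹_›, toSet ∘ g, fun m => ?_, ?_⟩
  · exact (isOpen_discrete {true}).preimage ((continuous_apply m).comp hg)
  · rw [range_comp, hrange]
    exact image_preimage_eq Γ htoSet

theorem statement_7_general {N : Type*} {Γ₀ Γ₁ : Set (Set N)} (hher₀ : HerFam Γ₀)
    (hher₁ : HerFam Γ₁) (hana : AnalyticFam Γ₁) (hncg : ¬ CtblGenIn Γ₁ (orthFamC Γ₀)) :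
    ∃ u : List (Fin 2) → N, Function.Injective u ∧
      ∀ i : Fin 2, ∀ X : Set (List (Fin 2)), BChain i X → u '' X ∈ ![Γ₀, Γ₁] i := by
  obtain ⟨X, _, _, f, hf, rfl⟩ := hana.exists_polishSpace_range_eq
  let := upgradeIsCompletelyMetrizable X
  exact exists_dyadic_embedding_of_isOpen hher₀ hher₁ hf mem_range_self hncg

/-- if {Γ₀, Γ₁} is a 2-gap on a countable set N with Γ₁ analytic and not
countably generated in Γ₀^⊥, then there is an injection u of the dyadic tree into N
sending [i]-chains into Γ_i, for i = 0, 1. -/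
theorem statement_7 (N : Type) [Countable N] [Infinite N] (Γ₀ Γ₁ : Set (Set N))
    (horth : OrthFam Γ₀ Γ₁) (hher₀ : HerFam Γ₀) (hher₁ : HerFam Γ₁)
    (hnsep : ¬ SepFam ![Γ₀, Γ₁]) (hana : AnalyticFam Γ₁)
    (hncg : ¬ CtblGenIn Γ₁ (orthFamC Γ₀)) :
    ∃ u : List (Fin 2) → N, Function.Injective u ∧
      ∀ i : Fin 2, ∀ X : Set (List (Fin 2)), BChain i X → u '' X ∈ ![Γ₀, Γ₁] i := by
  exact statement_7_general hher₀ hher₁ hana hncg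
end
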